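/- Let β be a positive integer and c > 0 a real number. Then there exists a constant C > 0, depending only on β and c, such that for all x ∈ [−1,1] and all α, n ∈ ℕ₀ with α ≥ c(1+n), ((1−x)/2)^{α/2+1/4} ((1+x)/2)^{β/2+1/4} |P_n^{(α,β)}(x)| ≤ C (n+1)^{−1/3} ( (n+1)/(α+1) )^{β/2+1/4}. -/

import Mathlib

/-- Generalized binomial coefficient `C(t, j) = t(t-1)⋯(t-j+1)/j!`. -/
noncomputable def genChoose (t : ℝ) (j : ℕ) : ℝ :=
  (∏ i ∈ Finset.range j, (t - (i : ℝ))) / (Nat.factorial j : ℝ)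

/-- Jacobi polynomial
`P_n^{(α,β)}(x) = ∑_{s=0}^n C(n+α, n-s) C(n+β, s) ((x-1)/2)^s ((x+1)/2)^{n-s}`. -/
noncomputable def jacobi (α β : ℝ) (n : ℕ) (x : ℝ) : ℝ :=
  ∑ s ∈ Finset.range (n + 1),
    genChoose ((n : ℝ) + α) (n - s) * genChoose ((n : ℝ) + β) s *
      ((x - 1) / 2) ^ s * ((x + 1) / 2) ^ (n - s)

/-!
In the variable `w` with `x = -cos (2 w)`, the weighted Jacobi polynomial solves `u'' = -Q u` on
`(0, π / 2)`, where `Q` is the Pöschl–Teller potential `κ - (a tan w - b cot w)²` with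
`a² = α² - 1/4` and `b² = β² - 1/4`; here `κ` is of order `(n + 1) α`. Where `κ tan² w` is bounded,
the power series bounds `u` by `M`, of order `(n + 1)^(-1/2) ((n + 1) / (α + 1))^(β/2 + 1/4)`.
Sonin's function `u² + u'² / Q` up to the crest of `Q`, and the energy `u'² + Q u²` just beyond it,
keep `|u|` of order `M` as long as `Q` is comparable to `κ`. From there to the turning point, an
adiabatic invariant for the potential `Q + η`, with a shift `η` of the Airy size `a h` where
`κ = a h³`, decreases; since `√η` is smaller than `√κ` by a factor of order `h`, `u²` grows at most
by a factor of order `h`, and `h` is of order `(n + 1)^(1/3)`. Beyond the turning point `u²` is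
convex and vanishes at `π / 2`.
-/

open Real Set

section Oscillator

lemma antitoneOn_of_hasDerivAt_nonpos {D : Set ℝ} (hD : Convex ℝ D) {f f' : ℝ → ℝ}
    (hf : ∀ x ∈ D, HasDerivAt f (f' x) x) (hf' : ∀ x ∈ D, f' x ≤ 0) : AntitoneOn f D :=
  antitoneOn_of_hasDerivWithinAt_nonpos hD (fun x hx => (hf x hx).continuousAt.continuousWithinAt)
    (fun x hx => (hf x (interior_subset hx)).hasDerivWithinAt)
    fun x hx => hf' x (interior_subset hx)

/-- `u` solves the oscillator equation `u'' = -Q u` on `s`, with derivative `v`. -/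
structure IsOscillatorOn (Q u v : ℝ → ℝ) (s : Set ℝ) : Prop where
  hasDerivAt : ∀ x ∈ s, HasDerivAt u (v x) x
  hasDerivAt_deriv : ∀ x ∈ s, HasDerivAt v (-Q x * u x) x

/-- The quadratic form `φ v² - φ₁ u v + (q φ + φ₂ / 2) u²`. Along an oscillator with potential
`q`, and with `φ₁`, `φ₂` the derivatives of the multiplier `φ`, its derivative is a multiple of
`u²`. -/
noncomputable def weightedEnergy (φ φ₁ φ₂ q u v : ℝ) : ℝ :=
  φ * v ^ 2 - φ₁ * u * v + (q * φ + φ₂ / 2) * u ^ 2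

/-- The energy `v² + q u²` of an oscillator with potential `q`. -/
def oscillatorEnergy (q u v : ℝ) : ℝ :=
  v ^ 2 + q * u ^ 2

variable {Q Q₁ Q₂ Q₃ u v : ℝ → ℝ} {s t : Set ℝ}

namespace IsOscillatorOn

lemma mono (h : IsOscillatorOn Q u v s) (hts : t ⊆ s) : IsOscillatorOn Q u v t :=
  ⟨fun x hx => h.hasDerivAt x (hts hx), fun x hx => h.hasDerivAt_deriv x (hts hx)⟩

lemma hasDerivAt_energy (h : IsOscillatorOn Q u v s) {x q₁ : ℝ} (hx : x ∈ s)
    (hQ : HasDerivAt Q q₁ x) :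
    HasDerivAt (fun x => oscillatorEnergy (Q x) (u x) (v x)) (q₁ * u x ^ 2) x := by
  refine (((h.hasDerivAt_deriv x hx).pow 2).add
    (hQ.mul ((h.hasDerivAt x hx).pow 2))).congr_deriv ?_
  simp only [Pi.pow_apply]
  ring

lemma antitoneOn_energy (h : IsOscillatorOn Q u v s) (hs : Convex ℝ s)
    (hQ : ∀ x ∈ s, HasDerivAt Q (Q₁ x) x) (hQ₁ : ∀ x ∈ s, Q₁ x ≤ 0) :
    AntitoneOn (fun x => oscillatorEnergy (Q x) (u x) (v x)) s :=
  antitoneOn_of_hasDerivAt_nonpos hs (fun x hx => h.hasDerivAt_energy hx (hQ x hx))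
    fun x hx => mul_nonpos_of_nonpos_of_nonneg (hQ₁ x hx) (sq_nonneg _)

lemma antitoneOn_energy_div (h : IsOscillatorOn Q u v s) (hs : Convex ℝ s)
    (hQ : ∀ x ∈ s, HasDerivAt Q (Q₁ x) x) (hpos : ∀ x ∈ s, 0 < Q x) (hQ₁ : ∀ x ∈ s, 0 ≤ Q₁ x) :
    AntitoneOn (fun x => oscillatorEnergy (Q x) (u x) (v x) / Q x) s := by
  refine antitoneOn_of_hasDerivAt_nonpos (f' := fun x => -(Q₁ x * v x ^ 2 / Q x ^ 2)) hs
    (fun x hx => ?_) fun x hx => ?_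
  · refine ((h.hasDerivAt_energy hx (hQ x hx)).div (hQ x hx) (hpos x hx).ne').congr_deriv ?_
    simp only [oscillatorEnergy]
    ring
  · have := hQ₁ x hx
    simp only [neg_nonpos]
    positivity

-- Sonin's monotonicity of `energy / Q` up to the crest `y`, and of the energy beyond it.
lemma energy_le_of_crest {p y q z κ : ℝ} (h : IsOscillatorOn Q u v (Icc p q))
    (hQ : ∀ x ∈ Icc p q, HasDerivAt Q (Q₁ x) x) (hpos : ∀ x ∈ Icc p q, 0 < Q x)
    (hκ : ∀ x ∈ Icc p q, Q x ≤ κ) (hy : y ∈ Icc p q) (hl : ∀ x ∈ Icc p y, 0 ≤ Q₁ x)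
    (hr : ∀ x ∈ Icc y q, Q₁ x ≤ 0) (hz : z ∈ Icc p q) :
    oscillatorEnergy (Q z) (u z) (v z) ≤ κ * (oscillatorEnergy (Q p) (u p) (v p) / Q p) := by
  have hE : 0 ≤ oscillatorEnergy (Q p) (u p) (v p) := by
    have := hpos p ⟨le_rfl, hy.1.trans hy.2⟩
    unfold oscillatorEnergy
    positivity
  have hpy : Icc p y ⊆ Icc p q := Icc_subset_Icc_right hy.2
  have hyq : Icc y q ⊆ Icc p q := Icc_subset_Icc_left hy.1
  have left : ∀ w ∈ Icc p y, oscillatorEnergy (Q w) (u w) (v w) ≤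
      κ * (oscillatorEnergy (Q p) (u p) (v p) / Q p) := by
    intro w hw
    have hsonin := (h.mono hpy).antitoneOn_energy_div (convex_Icc p y)
      (fun x hx => hQ x (hpy hx)) (fun x hx => hpos x (hpy hx)) hl
      ⟨le_rfl, hy.1⟩ hw hw.1
    calc _ ≤ Q w * (oscillatorEnergy (Q p) (u p) (v p) / Q p) := by
          rwa [div_le_iff₀' (hpos w (hpy hw))] at hsonin
      _ ≤ _ := mul_le_mul_of_nonneg_right (hκ w (hpy hw))
          (div_nonneg hE (hpos p ⟨le_rfl, hy.1.trans hy.2⟩).le)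
  rcases le_total z y with hzy | hyz
  · exact left z ⟨hz.1, hzy⟩
  · exact ((h.mono hyq).antitoneOn_energy (convex_Icc y q) (fun x hx => hQ x (hyq hx)) hr
      ⟨le_rfl, hy.2⟩ ⟨hyz, hz.2⟩ hyz).trans (left y ⟨hy.1, le_rfl⟩)

lemma exists_deriv_le {p q M : ℝ} (h : IsOscillatorOn Q u v (Icc p q)) (hpq : p < q)
    (hM : ∀ x ∈ Icc p q, |u x| ≤ M) : ∃ x ∈ Ioo p q, |v x| ≤ 2 * M / (q - p) := by
  obtain ⟨x, hx, hvx⟩ := exists_hasDerivAt_eq_slope u v hpq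
    (fun x hx => (h.hasDerivAt x hx).continuousAt.continuousWithinAt)
    (fun x hx => h.hasDerivAt x (Ioo_subset_Icc_self hx))
  refine ⟨x, hx, ?_⟩
  rw [hvx, abs_div, abs_of_pos (sub_pos.2 hpq)]
  refine div_le_div_of_nonneg_right ?_ (sub_pos.2 hpq).le
  calc |u q - u p| ≤ |u q| + |u p| := abs_sub _ _
    _ ≤ 2 * M := by linarith [hM q ⟨hpq.le, le_rfl⟩, hM p ⟨le_rfl, hpq.le⟩]

lemma convexOn_sq {p q : ℝ} (h : IsOscillatorOn Q u v (Ioo p q)) (hc : ContinuousOn u (Icc p q))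
    (hQ : ∀ x ∈ Ioo p q, Q x ≤ 0) : ConvexOn ℝ (Icc p q) (fun x => u x ^ 2) := by
  refine convexOn_of_hasDerivWithinAt2_nonneg (f' := fun x => 2 * u x * v x)
    (f'' := fun x => 2 * v x ^ 2 + 2 * -Q x * u x ^ 2) (convex_Icc p q) (hc.pow 2) ?_ ?_ ?_
  all_goals intro x hx; rw [interior_Icc] at hx
  · refine (((h.hasDerivAt x hx).pow 2).congr_deriv ?_).hasDerivWithinAt
    ring
  · refine ((((h.hasDerivAt x hx).const_mul 2).mul
      (h.hasDerivAt_deriv x hx)).congr_deriv ?_).hasDerivWithinAt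
    ring
  · have := neg_nonneg.2 (hQ x hx)
    positivity

lemma sq_le_sq_of_nonpos {p q x : ℝ} (h : IsOscillatorOn Q u v (Ioo p q))
    (hc : ContinuousOn u (Icc p q)) (hQ : ∀ x ∈ Ioo p q, Q x ≤ 0) (h0 : u q = 0)
    (hx : x ∈ Icc p q) : u x ^ 2 ≤ u p ^ 2 := by
  have hpq : p ≤ q := hx.1.trans hx.2
  simpa [h0, sq_nonneg] using
    (h.convexOn_sq hc hQ).le_max_of_mem_Icc (left_mem_Icc.2 hpq) (right_mem_Icc.2 hpq) hx

lemma hasDerivAt_weightedEnergy {φ φ₁ φ₂ : ℝ → ℝ} {x q₁ φ₃ : ℝ} (h : IsOscillatorOn Q u v s)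
    (hx : x ∈ s) (hQ : HasDerivAt Q q₁ x) (hφ : HasDerivAt φ (φ₁ x) x)
    (hφ₁ : HasDerivAt φ₁ (φ₂ x) x) (hφ₂ : HasDerivAt φ₂ φ₃ x) :
    HasDerivAt (fun x => weightedEnergy (φ x) (φ₁ x) (φ₂ x) (Q x) (u x) (v x))
      ((φ₃ / 2 + 2 * Q x * φ₁ x + q₁ * φ x) * u x ^ 2) x := by
  have hu := h.hasDerivAt x hx
  have hv := h.hasDerivAt_deriv x hx
  refine (((hφ.mul (hv.pow 2)).sub ((hφ₁.mul hu).mul hv)).add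
    (((hQ.mul hφ).add (hφ₂.div_const 2)).mul (hu.pow 2))).congr_deriv ?_
  simp only [Pi.pow_apply, Pi.mul_apply, Pi.add_apply]
  ring

end IsOscillatorOn

/-- The weighted energy for the multiplier `1 / r`, where `r = √(q + η)` and `q₁`, `q₂` are the
derivatives of the potential `q`. The shift `η > 0` keeps this modified adiabatic invariant
regular at the turning point `q = 0`. -/
noncomputable def adiabaticInvariant (η q q₁ q₂ u v : ℝ) : ℝ :=
  weightedEnergy (√(q + η) ^ 1)⁻¹ (-q₁ / 2 * (√(q + η) ^ 3)⁻¹)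
    (-q₂ / 2 * (√(q + η) ^ 3)⁻¹ + 3 / 4 * q₁ ^ 2 * (√(q + η) ^ 5)⁻¹) q u v

/-- The shift `η` dominates the derivatives `q₁`, `q₂`, `q₃` of a decreasing potential strongly
enough to make the adiabatic invariant decrease. -/
structure IsSlowShift (η q₁ q₂ q₃ : ℝ) : Prop where
  pos : 0 < η
  deriv_nonpos : q₁ ≤ 0
  deriv_sq_le : q₁ ^ 2 ≤ η ^ 3 / 3
  deriv2_nonpos : q₂ ≤ 0
  neg_deriv2_le : -q₂ ≤ η ^ 2 / 4
  neg_deriv3_le : -q₃ ≤ η * -q₁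

lemma hasDerivAt_inv_sqrt_pow {x q₁ η : ℝ} (k : ℕ) (hQ : HasDerivAt Q q₁ x)
    (hpos : 0 < Q x + η) :
    HasDerivAt (fun x => (√(Q x + η) ^ k)⁻¹) (-(k * q₁ / 2) * (√(Q x + η) ^ (k + 2))⁻¹) x := by
  have hr : √(Q x + η) ≠ 0 := (Real.sqrt_pos.2 hpos).ne'
  refine ((((hQ.add_const η).sqrt hpos.ne').pow k).inv (pow_ne_zero k hr)).congr_deriv ?_
  simp only [Pi.pow_apply]
  rcases k with _ | k
  · simp
  · rw [Nat.add_sub_cancel]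
    field_simp
    ring

lemma IsOscillatorOn.hasDerivAt_adiabaticInvariant {x η q₃ : ℝ} (h : IsOscillatorOn Q u v s)
    (hx : x ∈ s) (hQ : HasDerivAt Q (Q₁ x) x) (hQ₁ : HasDerivAt Q₁ (Q₂ x) x)
    (hQ₂ : HasDerivAt Q₂ q₃ x) (hpos : 0 < Q x + η) :
    HasDerivAt (fun x => adiabaticInvariant η (Q x) (Q₁ x) (Q₂ x) (u x) (v x))
      ((η * Q₁ x - q₃ / 4 + 9 / 8 * Q₁ x * Q₂ x / (Q x + η)
        - 15 / 16 * Q₁ x * (Q₁ x / (Q x + η)) ^ 2) / √(Q x + η) ^ 3 * u x ^ 2) x := by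
  have hr : 0 < √(Q x + η) := Real.sqrt_pos.2 hpos
  have hr2 : √(Q x + η) ^ 2 = Q x + η := Real.sq_sqrt hpos.le
  have hφ := hasDerivAt_inv_sqrt_pow 1 hQ hpos
  have hφ₁ := (hQ₁.fun_neg.div_const 2).fun_mul (hasDerivAt_inv_sqrt_pow 3 hQ hpos)
  have hφ₂ := ((hQ₂.fun_neg.div_const 2).fun_mul (hasDerivAt_inv_sqrt_pow 3 hQ hpos)).fun_add
    (((hQ₁.fun_pow 2).const_mul (3 / 4)).fun_mul (hasDerivAt_inv_sqrt_pow 5 hQ hpos))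
  refine (h.hasDerivAt_weightedEnergy hx hQ (hφ.congr_deriv ?_) (hφ₁.congr_deriv ?_)
    hφ₂).congr_deriv ?_
  · norm_num [neg_div]
  · push_cast
    ring
  · push_cast
    generalize √(Q x + η) = r at hr hr2 ⊢
    rw [← hr2, eq_sub_of_add_eq' hr2.symm]
    field_simp
    ring

namespace IsSlowShift

variable {η q q₁ q₂ q₃ : ℝ}

lemma deriv_sq_div_le (h : IsSlowShift η q₁ q₂ q₃) (hq : 0 ≤ q) :
    (q₁ / (q + η)) ^ 2 ≤ η / 3 := by
  have hη := h.pos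
  rw [div_pow, div_le_iff₀ (by positivity)]
  calc q₁ ^ 2 ≤ η / 3 * η ^ 2 := h.deriv_sq_le.trans_eq (by ring)
    _ ≤ η / 3 * (q + η) ^ 2 := by gcongr; linarith

lemma neg_deriv2_div_le (h : IsSlowShift η q₁ q₂ q₃) (hq : 0 ≤ q) :
    -q₂ / (q + η) ≤ η / 4 := by
  have hη := h.pos
  rw [div_le_iff₀ (by positivity)]
  calc -q₂ ≤ η / 4 * η := h.neg_deriv2_le.trans_eq (by ring)
    _ ≤ η / 4 * (q + η) := by gcongr; linarith

lemma adiabaticInvariant_deriv_nonpos (h : IsSlowShift η q₁ q₂ q₃) (hq : 0 ≤ q) :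
    η * q₁ - q₃ / 4 + 9 / 8 * q₁ * q₂ / (q + η) - 15 / 16 * q₁ * (q₁ / (q + η)) ^ 2 ≤ 0 := by
  have h₁ := mul_le_mul_of_nonneg_left (h.deriv_sq_div_le hq) (neg_nonneg.2 h.deriv_nonpos)
  have h₂ := mul_le_mul_of_nonneg_left (h.neg_deriv2_div_le hq) (neg_nonneg.2 h.deriv_nonpos)
  calc η * q₁ - q₃ / 4 + 9 / 8 * q₁ * q₂ / (q + η) - 15 / 16 * q₁ * (q₁ / (q + η)) ^ 2
      = η * q₁ + -q₃ / 4 + 9 / 8 * (-q₁ * (-q₂ / (q + η)))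
        + 15 / 16 * (-q₁ * (q₁ / (q + η)) ^ 2) := by ring
    _ ≤ η * q₁ + η * -q₁ / 4 + 9 / 8 * (-q₁ * (η / 4)) + 15 / 16 * (-q₁ * (η / 3)) := by
        linarith [h.neg_deriv3_le]
    _ = η * q₁ * (5 / 32) := by ring
    _ ≤ 0 := by nlinarith [h.pos, h.deriv_nonpos]

lemma le_adiabaticInvariant (h : IsSlowShift η q₁ q₂ q₃) (hq : 0 ≤ q) (u v : ℝ) :
    (q / √(q + η) + 5 / 16 * (q₁ ^ 2 / √(q + η) ^ 5)) * u ^ 2 ≤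
      adiabaticInvariant η q q₁ q₂ u v := by
  have hr : 0 < √(q + η) := Real.sqrt_pos.2 (add_pos_of_nonneg_of_pos hq h.pos)
  have hsq : adiabaticInvariant η q q₁ q₂ u v -
      (q / √(q + η) + 5 / 16 * (q₁ ^ 2 / √(q + η) ^ 5)) * u ^ 2 =
      (v + q₁ * u / (4 * √(q + η) ^ 2)) ^ 2 / √(q + η) + -q₂ * u ^ 2 / (4 * √(q + η) ^ 3) := by
    unfold adiabaticInvariant weightedEnergy
    field_simp
    ring
  have := neg_nonneg.2 h.deriv2_nonpos
  rw [← sub_nonneg, hsq]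
  positivity

lemma adiabaticInvariant_le (h : IsSlowShift η q₁ q₂ q₃) (hq : 0 ≤ q) (u v : ℝ) :
    adiabaticInvariant η q q₁ q₂ u v ≤
      2 * oscillatorEnergy (q + η) u v / √(q + η) := by
  have hpos : 0 < q + η := add_pos_of_nonneg_of_pos hq h.pos
  have hr : 0 < √(q + η) := Real.sqrt_pos.2 hpos
  have hr2 : √(q + η) ^ 2 = q + η := Real.sq_sqrt hpos.le
  have expand : adiabaticInvariant η q q₁ q₂ u v = (v ^ 2 + q₁ / (q + η) / 2 * u * v +
      (q + -q₂ / (q + η) / 4 + 3 / 8 * (q₁ / (q + η)) ^ 2) * u ^ 2) / √(q + η) := by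
    unfold adiabaticInvariant weightedEnergy
    generalize √(q + η) = r at hr hr2 ⊢
    rw [← hr2]
    field_simp
    ring
  rw [expand]
  gcongr
  have cross : q₁ / (q + η) / 2 * u * v ≤ v ^ 2 + (q₁ / (q + η)) ^ 2 / 16 * u ^ 2 := by
    linear_combination sq_nonneg (v - q₁ / (q + η) / 4 * u)
  have h₁ := mul_le_mul_of_nonneg_right (h.deriv_sq_div_le hq) (sq_nonneg u)
  have h₂ := mul_le_mul_of_nonneg_right (h.neg_deriv2_div_le hq) (sq_nonneg u)
  have hη := mul_nonneg h.pos.le (sq_nonneg u)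
  have hqu := mul_nonneg hq (sq_nonneg u)
  unfold oscillatorEnergy
  linarith

end IsSlowShift

lemma IsOscillatorOn.antitoneOn_adiabaticInvariant {η : ℝ} (h : IsOscillatorOn Q u v s)
    (hs : Convex ℝ s) (hQ : ∀ x ∈ s, HasDerivAt Q (Q₁ x) x)
    (hQ₁ : ∀ x ∈ s, HasDerivAt Q₁ (Q₂ x) x) (hQ₂ : ∀ x ∈ s, HasDerivAt Q₂ (Q₃ x) x)
    (hnonneg : ∀ x ∈ s, 0 ≤ Q x) (hη : ∀ x ∈ s, IsSlowShift η (Q₁ x) (Q₂ x) (Q₃ x)) :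
    AntitoneOn (fun x => adiabaticInvariant η (Q x) (Q₁ x) (Q₂ x) (u x) (v x)) s := by
  refine antitoneOn_of_hasDerivAt_nonpos hs (fun x hx => h.hasDerivAt_adiabaticInvariant hx
    (hQ x hx) (hQ₁ x hx) (hQ₂ x hx) (add_pos_of_nonneg_of_pos (hnonneg x hx) (hη x hx).pos))
    fun x hx => mul_nonpos_of_nonpos_of_nonneg (div_nonpos_of_nonpos_of_nonneg
      ((hη x hx).adiabaticInvariant_deriv_nonpos (hnonneg x hx)) ?_) (sq_nonneg _)
  positivity

end Oscillator

section PoschlTeller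

/-- The Pöschl–Teller potential `κ + 2ab - a² tan² w - b² cot² w` as a function of
`t = tan w`. -/
noncomputable def poschlTeller (κ a b t : ℝ) : ℝ :=
  κ - (a * t - b / t) ^ 2

/-- The first derivative of the Pöschl–Teller potential with respect to `w`, as a function of
`t = tan w`. -/
noncomputable def poschlTeller₁ (a b t : ℝ) : ℝ :=
  -(2 * (1 + t ^ 2) * (a ^ 2 * t - b ^ 2 / t ^ 3))

/-- The second derivative of the Pöschl–Teller potential with respect to `w`, as a function of
`t = tan w`. -/
noncomputable def poschlTeller₂ (a b t : ℝ) : ℝ :=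
  -(a ^ 2 * (2 + 8 * t ^ 2 + 6 * t ^ 4) + b ^ 2 * (2 + 8 / t ^ 2 + 6 / t ^ 4))

/-- The third derivative of the Pöschl–Teller potential with respect to `w`, as a function of
`t = tan w`. -/
noncomputable def poschlTeller₃ (a b t : ℝ) : ℝ :=
  -((1 + t ^ 2) * (a ^ 2 * (16 * t + 24 * t ^ 3) - b ^ 2 * (16 / t ^ 3 + 24 / t ^ 5)))

variable {κ a b h p t : ℝ}

lemma cos_pos_of_mem_Ioo_zero {w : ℝ} (hw : w ∈ Ioo 0 (π / 2)) : 0 < cos w :=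
  cos_pos_of_mem_Ioo ⟨by linarith [hw.1, pi_pos], hw.2⟩

lemma tan_pos_of_mem_Ioo_zero {w : ℝ} (hw : w ∈ Ioo 0 (π / 2)) : 0 < tan w :=
  tan_pos_of_pos_of_lt_pi_div_two hw.1 hw.2

lemma tan_le_tan_of_mem_Ioo_zero {w z : ℝ} (hw : w ∈ Ioo 0 (π / 2)) (hz : z ∈ Ioo 0 (π / 2))
    (hwz : w ≤ z) : tan w ≤ tan z :=
  strictMonoOn_tan.monotoneOn ⟨by linarith [hw.1, pi_pos], hw.2⟩
    ⟨by linarith [hz.1, pi_pos], hz.2⟩ hwz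

lemma hasDerivAt_tan_sq {w : ℝ} (hw : w ∈ Ioo 0 (π / 2)) :
    HasDerivAt tan (1 + tan w ^ 2) w := by
  have hc := (cos_pos_of_mem_Ioo_zero hw).ne'
  refine (Real.hasDerivAt_tan hc).congr_deriv ?_
  rw [← inv_one_add_tan_sq hc, one_div, inv_inv]

lemma hasDerivAt_poschlTeller (κ a b : ℝ) {w : ℝ} (hw : w ∈ Ioo 0 (π / 2)) :
    HasDerivAt (fun w => poschlTeller κ a b (tan w)) (poschlTeller₁ a b (tan w)) w := by
  have ht := (tan_pos_of_mem_Ioo_zero hw).ne'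
  have hd := hasDerivAt_tan_sq hw
  refine ((((hd.const_mul a).fun_sub
    ((hasDerivAt_const w b).fun_div hd ht)).fun_pow 2).const_sub κ).congr_deriv ?_
  unfold poschlTeller₁
  push_cast
  field_simp
  ring

lemma hasDerivAt_poschlTeller₁ (a b : ℝ) {w : ℝ} (hw : w ∈ Ioo 0 (π / 2)) :
    HasDerivAt (fun w => poschlTeller₁ a b (tan w)) (poschlTeller₂ a b (tan w)) w := by
  have ht := (tan_pos_of_mem_Ioo_zero hw).ne'
  have hd := hasDerivAt_tan_sq hw
  refine ((((hd.fun_pow 2).const_add 1).const_mul 2).fun_mul ((hd.const_mul (a ^ 2)).fun_sub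
    ((hasDerivAt_const w (b ^ 2)).fun_div (hd.fun_pow 3) (pow_ne_zero 3 ht)))).fun_neg.congr_deriv
    ?_
  unfold poschlTeller₂
  push_cast
  field_simp
  ring

lemma hasDerivAt_poschlTeller₂ (a b : ℝ) {w : ℝ} (hw : w ∈ Ioo 0 (π / 2)) :
    HasDerivAt (fun w => poschlTeller₂ a b (tan w)) (poschlTeller₃ a b (tan w)) w := by
  have ht := (tan_pos_of_mem_Ioo_zero hw).ne'
  have hd := hasDerivAt_tan_sq hw
  have hl := (((hd.fun_pow 2).const_mul 8).const_add 2).fun_add ((hd.fun_pow 4).const_mul 6)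
  have hr := (((hasDerivAt_const w (8 : ℝ)).fun_div (hd.fun_pow 2) (pow_ne_zero 2 ht)).const_add
    2).fun_add ((hasDerivAt_const w (6 : ℝ)).fun_div (hd.fun_pow 4) (pow_ne_zero 4 ht))
  refine ((hl.const_mul (a ^ 2)).fun_add (hr.const_mul (b ^ 2))).fun_neg.congr_deriv ?_
  unfold poschlTeller₃
  push_cast
  field_simp
  ring

lemma poschlTeller_le (κ a b t : ℝ) : poschlTeller κ a b t ≤ κ :=
  sub_le_self _ (sq_nonneg _)

lemma le_poschlTeller {σ ρ ε : ℝ} (hσ : 0 < σ) (hab : a * σ ^ 2 = b) (ha : 0 < a) (hε : 0 ≤ ε)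
    (hρ : 0 < ρ) (hle : ρ ≤ 1 + ε) (hge : 1 ≤ ρ * (1 + ε)) :
    κ - 4 * a * b * ε ^ 2 ≤ poschlTeller κ a b (σ * ρ) := by
  have hdiff : a * (σ * ρ) - b / (σ * ρ) = a * σ * (ρ - 1 / ρ) := by
    rw [← hab]
    field_simp
  have hinv : 1 / ρ ≤ 1 + ε := by rwa [div_le_iff₀' hρ]
  have hinv' : 1 ≤ 1 / ρ * (1 + ε) := by rwa [one_div_mul_eq_div, le_div_iff₀ hρ, one_mul]
  have hup : ρ - 1 / ρ ≤ 2 * ε := by nlinarith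
  have hlow : -(2 * ε) ≤ ρ - 1 / ρ := by nlinarith
  have hsq : (ρ - 1 / ρ) ^ 2 ≤ (2 * ε) ^ 2 := sq_le_sq' hlow hup
  have := mul_le_mul_of_nonneg_left hsq (sq_nonneg (a * σ))
  rw [poschlTeller, hdiff]
  linear_combination this + 4 * a * ε ^ 2 * hab

lemma poschlTeller_le_poschlTeller {t' : ℝ} (ha : 0 ≤ a) (hb : 0 ≤ b) (ht : 0 < t)
    (hcrest : b ≤ a * t ^ 2) (htt' : t ≤ t') : poschlTeller κ a b t' ≤ poschlTeller κ a b t := by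
  have hnonneg : 0 ≤ a * t - b / t := by
    rw [sub_nonneg, div_le_iff₀ ht]
    linarith
  unfold poschlTeller
  gcongr

lemma poschlTeller₁_nonneg (ha : 0 ≤ a) (ht : 0 < t) (hcrest : a * t ^ 2 ≤ b) :
    0 ≤ poschlTeller₁ a b t := by
  have hsq : (a * t ^ 2) ^ 2 ≤ b ^ 2 := by gcongr
  have h : a ^ 2 * t ≤ b ^ 2 / t ^ 3 := by
    rw [le_div_iff₀ (by positivity)]
    linarith
  unfold poschlTeller₁
  nlinarith [sq_nonneg t]

lemma poschlTeller₁_nonpos (hb : 0 ≤ b) (ht : 0 < t) (hcrest : b ≤ a * t ^ 2) :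
    poschlTeller₁ a b t ≤ 0 := by
  have hsq : b ^ 2 ≤ (a * t ^ 2) ^ 2 := by gcongr
  have h : b ^ 2 / t ^ 3 ≤ a ^ 2 * t := by
    rw [div_le_iff₀ (by positivity)]
    linarith
  unfold poschlTeller₁
  nlinarith [sq_nonneg t]

lemma poschlTeller₂_nonpos (a b t : ℝ) : poschlTeller₂ a b t ≤ 0 := by
  rw [poschlTeller₂, neg_nonpos]
  positivity

lemma neg_poschlTeller₁_le (a b : ℝ) (ht : 0 < t) :
    -poschlTeller₁ a b t ≤ 2 * (1 + t ^ 2) * (a ^ 2 * t) := by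
  rw [poschlTeller₁, neg_neg]
  gcongr
  exact sub_le_self _ (by positivity)

lemma neg_poschlTeller₂_le (hb : 0 ≤ b) (ht : 0 < t) (hcrest : b ≤ a * t ^ 2) :
    -poschlTeller₂ a b t ≤ 8 * (a * (1 + t ^ 2)) ^ 2 := by
  have hsq : b ^ 2 ≤ (a * t ^ 2) ^ 2 := by gcongr
  calc -poschlTeller₂ a b t
      = a ^ 2 * (2 + 8 * t ^ 2 + 6 * t ^ 4) + b ^ 2 * (2 + 8 / t ^ 2 + 6 / t ^ 4) := neg_neg _
    _ ≤ a ^ 2 * (2 + 8 * t ^ 2 + 6 * t ^ 4) + (a * t ^ 2) ^ 2 * (2 + 8 / t ^ 2 + 6 / t ^ 4) := by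
        gcongr
    _ = 8 * (a * (1 + t ^ 2)) ^ 2 := by
        field_simp
        ring

lemma neg_poschlTeller₃_le (a b : ℝ) (ht : 0 < t) :
    -poschlTeller₃ a b t ≤ 12 * (1 + t ^ 2) * (2 * (1 + t ^ 2) * (a ^ 2 * t)) := by
  calc -poschlTeller₃ a b t
      = (1 + t ^ 2) * (a ^ 2 * (16 * t + 24 * t ^ 3) - b ^ 2 * (16 / t ^ 3 + 24 / t ^ 5)) :=
        neg_neg _
    _ ≤ (1 + t ^ 2) * (a ^ 2 * (24 * t + 24 * t ^ 3)) := by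
        gcongr
        exact (sub_le_self _ (by positivity)).trans (by gcongr; norm_num)
    _ = 12 * (1 + t ^ 2) * (2 * (1 + t ^ 2) * (a ^ 2 * t)) := by ring

-- Past the crest `a t² = b`, the term `a² t` dominates the slope of the potential.
lemma le_neg_poschlTeller₁ (hb : 0 ≤ b) (ht : 0 < t) (hcrest : b + 1 / 2 ≤ a * t ^ 2) :
    2 * (1 + t ^ 2) * (a ^ 2 * t) ≤ (1 + b) * -poschlTeller₁ a b t := by
  have hsq : (b + 1 / 2) ^ 2 ≤ (a * t ^ 2) ^ 2 := by gcongr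
  have hdom : (1 + b) * (b ^ 2 / t ^ 3) ≤ b * (a ^ 2 * t) := by
    rw [← mul_div_assoc, div_le_iff₀ (by positivity)]
    linear_combination b * hsq + hb / 4
  have := mul_le_mul_of_nonneg_left hdom (by positivity : 0 ≤ 2 * (1 + t ^ 2))
  rw [poschlTeller₁]
  linear_combination this

/-- The parameters of a Pöschl–Teller potential of height `κ = a h³`, for which the Airy
amplification factor at the turning point is `h`; the bound `κ ≤ p a²` keeps `tan²` bounded up to
the turning point. -/
structure IsAiryScale (κ a b h p : ℝ) : Prop where
  half_le_left : 1 / 2 ≤ a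
  half_le_right : 1 / 2 ≤ b
  one_le : 1 ≤ h
  eq_mul_cube : κ = a * h ^ 3
  cube_le : h ^ 3 ≤ p * a

/-- The factor `K` for which `K a h` is a slow shift of the potential. -/
noncomputable def airyShift (b p : ℝ) : ℝ :=
  24 * (1 + b) * (1 + (1 + 2 * b) * p)

namespace IsAiryScale

lemma left_pos (H : IsAiryScale κ a b h p) : 0 < a := by linarith [H.half_le_left]

lemma right_pos (H : IsAiryScale κ a b h p) : 0 < b := by linarith [H.half_le_right]

lemma scale_pos (H : IsAiryScale κ a b h p) : 0 < h := by linarith [H.one_le]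

lemma height_pos (H : IsAiryScale κ a b h p) : 0 < κ := by
  have := H.left_pos
  have := H.scale_pos
  rw [H.eq_mul_cube]
  positivity

lemma mul_le_height (H : IsAiryScale κ a b h p) : a * h ≤ κ := by
  rw [H.eq_mul_cube]
  have := H.left_pos
  gcongr
  exact le_self_pow₀ H.one_le (by norm_num)

lemma left_le_height (H : IsAiryScale κ a b h p) : a ≤ κ :=
  (le_mul_of_one_le_right H.left_pos.le H.one_le).trans H.mul_le_height

lemma ratio_nonneg (H : IsAiryScale κ a b h p) : 0 ≤ p :=
  nonneg_of_mul_nonneg_left ((pow_pos H.scale_pos 3).le.trans H.cube_le) H.left_pos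

lemma sq_mul_sq_le (H : IsAiryScale κ a b h p) (ht : 0 < t) (hQ : 0 ≤ poschlTeller κ a b t) :
    a ^ 2 * t ^ 2 ≤ (1 + 2 * b) * κ := by
  have hexpand : poschlTeller κ a b t = κ + 2 * a * b - a ^ 2 * t ^ 2 - (b / t) ^ 2 := by
    unfold poschlTeller
    field_simp
    ring
  have hb := mul_le_mul_of_nonneg_left H.left_le_height H.right_pos.le
  linarith [sq_nonneg (b / t)]

lemma one_add_sq_le (H : IsAiryScale κ a b h p) (ht : 0 < t) (hQ : 0 ≤ poschlTeller κ a b t) :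
    1 + t ^ 2 ≤ 1 + (1 + 2 * b) * p := by
  have ha := H.left_pos
  have hb := H.right_pos
  have : a ^ 2 * t ^ 2 ≤ a ^ 2 * ((1 + 2 * b) * p) := calc
    a ^ 2 * t ^ 2 ≤ (1 + 2 * b) * (a * h ^ 3) := H.eq_mul_cube ▸ H.sq_mul_sq_le ht hQ
    _ ≤ (1 + 2 * b) * (a * (p * a)) := by
      gcongr
      exact H.cube_le
    _ = a ^ 2 * ((1 + 2 * b) * p) := by ring
  gcongr
  exact le_of_mul_le_mul_left this (by positivity)

lemma mul_one_add_sq_le_airyShift (H : IsAiryScale κ a b h p) (ht : 0 < t)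
    (hQ : 0 ≤ poschlTeller κ a b t) : 24 * (1 + b) * (1 + t ^ 2) ≤ airyShift b p := by
  have := H.right_pos
  unfold airyShift
  gcongr ?_ * ?_
  exact H.one_add_sq_le ht hQ

lemma one_le_airyShift (H : IsAiryScale κ a b h p) : 1 ≤ airyShift b p := by
  have := H.right_pos
  have := H.ratio_nonneg
  have : 0 ≤ (1 + 2 * b) * p := by positivity
  unfold airyShift
  nlinarith

lemma sq_poschlTeller₁_le (H : IsAiryScale κ a b h p) (ht : 0 < t)
    (hQ : 0 ≤ poschlTeller κ a b t) (hcrest : b ≤ a * t ^ 2) :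
    poschlTeller₁ a b t ^ 2 ≤ (airyShift b p * (a * h)) ^ 3 / 3 := by
  have ha := H.left_pos
  have hb := H.right_pos
  have hh := H.scale_pos
  have hK := H.mul_one_add_sq_le_airyShift ht hQ
  have hnonneg := neg_nonneg.2 (poschlTeller₁_nonpos hb.le ht hcrest)
  calc poschlTeller₁ a b t ^ 2
      = (-poschlTeller₁ a b t) ^ 2 := by ring
    _ ≤ (2 * (1 + t ^ 2) * (a ^ 2 * t)) ^ 2 := by
        gcongr
        exact neg_poschlTeller₁_le a b ht
    _ = 4 * (1 + t ^ 2) ^ 2 * a ^ 2 * (a ^ 2 * t ^ 2) := by ring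
    _ ≤ 4 * (1 + t ^ 2) ^ 2 * a ^ 2 * ((1 + 2 * b) * κ) := by
        gcongr _ * ?_
        exact H.sq_mul_sq_le ht hQ
    _ = 4 * (1 + 2 * b) * (1 + t ^ 2) ^ 2 * (a * h) ^ 3 := by
        rw [H.eq_mul_cube]
        ring
    _ ≤ (24 * (1 + b) * (1 + t ^ 2)) ^ 3 / 3 * (a * h) ^ 3 := by
        gcongr
        have hc : 4 * (1 + 2 * b) ≤ 4608 * (1 + b) ^ 3 := by nlinarith [pow_pos hb 3]
        calc 4 * (1 + 2 * b) * (1 + t ^ 2) ^ 2 ≤ 4608 * (1 + b) ^ 3 * (1 + t ^ 2) ^ 3 := by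
              gcongr
              · linarith [sq_nonneg t]
              · norm_num
          _ = (24 * (1 + b) * (1 + t ^ 2)) ^ 3 / 3 := by ring
    _ ≤ airyShift b p ^ 3 / 3 * (a * h) ^ 3 := by gcongr
    _ = (airyShift b p * (a * h)) ^ 3 / 3 := by ring

lemma isSlowShift (H : IsAiryScale κ a b h p) (ht : 0 < t) (hQ : 0 ≤ poschlTeller κ a b t)
    (hcrest : b + 1 / 2 ≤ a * t ^ 2) :
    IsSlowShift (airyShift b p * (a * h)) (poschlTeller₁ a b t) (poschlTeller₂ a b t)
      (poschlTeller₃ a b t) := by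
  have ha := H.left_pos
  have hb := H.right_pos
  have hh := H.scale_pos
  have hK := H.mul_one_add_sq_le_airyShift ht hQ
  have hle : b ≤ a * t ^ 2 := by linarith
  have hnonneg := neg_nonneg.2 (poschlTeller₁_nonpos hb.le ht hle)
  have hah : a ≤ a * h := le_mul_of_one_le_right ha.le H.one_le
  have hK0 : 0 < airyShift b p := one_pos.trans_le H.one_le_airyShift
  refine ⟨by positivity, poschlTeller₁_nonpos hb.le ht hle,
    H.sq_poschlTeller₁_le ht hQ hle, poschlTeller₂_nonpos a b t, ?_, ?_⟩
  · calc -poschlTeller₂ a b t ≤ 8 * (a * (1 + t ^ 2)) ^ 2 := neg_poschlTeller₂_le hb.le ht hle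
      _ ≤ (24 * (1 + b) * (1 + t ^ 2) * a) ^ 2 / 4 := by
        have : 0 ≤ a * (1 + t ^ 2) := by positivity
        nlinarith [mul_nonneg hb.le (sq_nonneg (a * (1 + t ^ 2))),
          mul_nonneg (sq_nonneg b) (sq_nonneg (a * (1 + t ^ 2)))]
      _ ≤ (airyShift b p * (a * h)) ^ 2 / 4 := by gcongr
  · calc -poschlTeller₃ a b t ≤ 12 * (1 + t ^ 2) * (2 * (1 + t ^ 2) * (a ^ 2 * t)) :=
        neg_poschlTeller₃_le a b ht
      _ ≤ 12 * (1 + t ^ 2) * ((1 + b) * -poschlTeller₁ a b t) := by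
        gcongr _ * ?_
        exact le_neg_poschlTeller₁ hb.le ht hcrest
      _ = 24 * (1 + b) * (1 + t ^ 2) * (1 / 2) * -poschlTeller₁ a b t := by ring
      _ ≤ airyShift b p * (a * h) * -poschlTeller₁ a b t := by
        gcongr
        exact H.half_le_left.trans hah

lemma le_sq_poschlTeller₁ (H : IsAiryScale κ a b h p) (ht : 0 < t)
    (hcrest : b + 1 / 2 ≤ a * t ^ 2) (hQ : poschlTeller κ a b t ≤ κ / 2) :
    2 * (a * h) ^ 3 ≤ ((1 + b) * poschlTeller₁ a b t) ^ 2 := by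
  have ha := H.left_pos
  have hb := H.right_pos
  have hbt : 0 ≤ a * t - b / t := by
    rw [sub_nonneg, div_le_iff₀ ht]
    linarith
  have hκ : κ / 2 ≤ (a * t) ^ 2 := calc
    κ / 2 ≤ (a * t - b / t) ^ 2 := by unfold poschlTeller at hQ; linarith
    _ ≤ (a * t) ^ 2 := by
      gcongr
      exact sub_le_self _ (by positivity)
  calc 2 * (a * h) ^ 3 = 4 * a ^ 2 * (κ / 2) := by rw [H.eq_mul_cube]; ring
    _ ≤ 4 * a ^ 2 * (a * t) ^ 2 := by gcongr
    _ = (2 * 1 * (a ^ 2 * t)) ^ 2 := by ring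
    _ ≤ (2 * (1 + t ^ 2) * (a ^ 2 * t)) ^ 2 := by
      gcongr
      linarith [sq_nonneg t]
    _ ≤ ((1 + b) * -poschlTeller₁ a b t) ^ 2 := by
      gcongr ?_ ^ 2
      exact le_neg_poschlTeller₁ hb.le ht hcrest
    _ = ((1 + b) * poschlTeller₁ a b t) ^ 2 := by ring

end IsAiryScale

end PoschlTeller

section TurningPoint

lemma sub_div_le_arctan_sub_arctan {x y : ℝ} (hx : 0 ≤ x) (hxy : x < y) :
    (y - x) / (1 + y ^ 2) ≤ arctan y - arctan x := by
  obtain ⟨z, hz, hslope⟩ := exists_hasDerivAt_eq_slope arctan (fun z => 1 / (1 + z ^ 2)) hxy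
    continuous_arctan.continuousOn fun z _ => Real.hasDerivAt_arctan z
  rw [eq_div_iff (sub_pos.2 hxy).ne'] at hslope
  have hz0 : 0 ≤ z := hx.trans hz.1.le
  rw [← hslope, div_eq_mul_one_div, mul_comm]
  have := sub_pos.2 hxy
  gcongr
  exact hz.2.le

lemma arctan_mem_Ioo_zero {t : ℝ} (ht : 0 < t) : arctan t ∈ Ioo 0 (π / 2) :=
  ⟨arctan_pos.2 ht, arctan_lt_pi_div_two t⟩

lemma Icc_subset_Ioo_zero {w z : ℝ} (hw : w ∈ Ioo 0 (π / 2)) (hz : z ∈ Ioo 0 (π / 2)) :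
    Icc w z ⊆ Ioo 0 (π / 2) :=
  Icc_subset_Ioo hw.1 hz.2

lemma le_tan_of_arctan_le {t w : ℝ} (ht : 0 < t) (hw : w ∈ Ioo 0 (π / 2)) (h : arctan t ≤ w) :
    t ≤ tan w := by
  simpa using tan_le_tan_of_mem_Ioo_zero (arctan_mem_Ioo_zero ht) hw h

lemma tan_le_of_le_arctan {t w : ℝ} (ht : 0 < t) (hw : w ∈ Ioo 0 (π / 2)) (h : w ≤ arctan t) :
    tan w ≤ t := by
  simpa using tan_le_tan_of_mem_Ioo_zero hw (arctan_mem_Ioo_zero ht) h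

-- Away from the turning point the potential `q` gives the bound, near it the slope `q₁` does.
lemma le_mul_of_slope {g K B q q₁ : ℝ} (hg : 0 < g) (hK : 1 ≤ K) (hB : 1 ≤ B) (hq : 0 ≤ q)
    (hq₁ : q ≤ g ^ 2 / 2 → 2 * g ^ 6 ≤ (B * q₁) ^ 2) :
    g ≤ 2 * B ^ 2 * (1 + K) ^ 5 *
      (q / √(q + K * g ^ 2) + 5 / 16 * (q₁ ^ 2 / √(q + K * g ^ 2) ^ 5)) := by
  have hpos : 0 < q + K * g ^ 2 := by positivity
  have hr0 : 0 < √(q + K * g ^ 2) := Real.sqrt_pos.2 hpos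
  have hr2 : √(q + K * g ^ 2) ^ 2 = q + K * g ^ 2 := Real.sq_sqrt hpos.le
  generalize √(q + K * g ^ 2) = r at hr0 hr2 ⊢
  have hBK : (1 + K) ≤ B ^ 2 * (1 + K) ^ 5 := by
    nlinarith [one_le_pow₀ hB (n := 2), le_self_pow₀ (by linarith : 1 ≤ 1 + K) (n := 5) (by simp)]
  rcases le_total q (g ^ 2 / 2) with hlow | hhigh
  · have hr : r ≤ (1 + K) * g := by
      refine le_of_sq_le_sq ?_ (by positivity)
      nlinarith [sq_nonneg (K * g), mul_nonneg (sub_nonneg.2 hK) (sq_nonneg g)]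
    have hsteep : (1 + K) ^ 5 * (2 * g ^ 6) ≤ (1 + K) ^ 5 * (B * q₁) ^ 2 := by
      gcongr
      exact hq₁ hlow
    have hslope : g * r ^ 5 ≤ (1 + K) ^ 5 * (B * q₁) ^ 2 * (5 / 8) := calc
      g * r ^ 5 ≤ g * ((1 + K) * g) ^ 5 := by gcongr
      _ = (1 + K) ^ 5 * (2 * g ^ 6) * (1 / 2) := by ring
      _ ≤ (1 + K) ^ 5 * (B * q₁) ^ 2 * (5 / 8) := by
        have : 0 ≤ (1 + K) ^ 5 * (B * q₁) ^ 2 := by positivity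
        linarith
    calc g ≤ 2 * B ^ 2 * (1 + K) ^ 5 * (5 / 16 * (q₁ ^ 2 / r ^ 5)) := by
          rw [← mul_div_assoc, ← mul_div_assoc, le_div_iff₀ (by positivity)]
          linear_combination hslope
      _ ≤ _ := by
          gcongr
          exact le_add_of_nonneg_left (by positivity)
  · have hr : g ≤ r := by
      refine le_of_sq_le_sq ?_ hr0.le
      nlinarith [sq_nonneg g]
    have hq' : g * r ≤ 2 * (1 + K) * q := calc
      g * r ≤ r ^ 2 := by nlinarith
      _ ≤ 2 * (1 + K) * q := by nlinarith
    calc g ≤ 2 * (1 + K) * (q / r) := by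
          rwa [← mul_div_assoc, le_div_iff₀ hr0]
      _ ≤ 2 * (B ^ 2 * (1 + K) ^ 5) * (q / r + 5 / 16 * (q₁ ^ 2 / r ^ 5)) := by
          gcongr
          exact le_add_of_nonneg_right (by positivity)
      _ = _ := by ring

variable {κ a b h p M S : ℝ} {u v : ℝ → ℝ}

/-- `u` is an oscillator on `(0, π / 2)` for the Pöschl–Teller potential, with derivative `v`. -/
abbrev IsPoschlTellerWave (κ a b : ℝ) (u v : ℝ → ℝ) : Prop :=
  IsOscillatorOn (fun w => poschlTeller κ a b (tan w)) u v (Ioo 0 (π / 2))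

/-- The value of `tan w` at which the Pöschl–Teller potential is largest. -/
noncomputable def crest (a b : ℝ) : ℝ :=
  √(b / a)

/-- A value of `tan w` past the crest at which the potential still has half its height, chosen so
that beyond it the slope is comparable to `a² t`. -/
noncomputable def shoulder (a b : ℝ) : ℝ :=
  crest a b * (1 + 1 / (4 * b))

namespace IsAiryScale

lemma crest_pos (H : IsAiryScale κ a b h p) : 0 < crest a b :=
  Real.sqrt_pos.2 (div_pos H.right_pos H.left_pos)

lemma mul_crest_sq (H : IsAiryScale κ a b h p) : a * crest a b ^ 2 = b := by
  have ha := H.left_pos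
  rw [crest, Real.sq_sqrt (div_pos H.right_pos ha).le, mul_div_cancel₀ _ ha.ne']

lemma crest_sq_le (H : IsAiryScale κ a b h p) : crest a b ^ 2 ≤ 2 * b := by
  rw [← mul_le_mul_iff_right₀ H.left_pos, H.mul_crest_sq]
  nlinarith [H.half_le_left, H.right_pos]

lemma crest_le_shoulder (H : IsAiryScale κ a b h p) : crest a b ≤ shoulder a b := by
  have := H.right_pos
  exact le_mul_of_one_le_right H.crest_pos.le (le_add_of_nonneg_right (by positivity))

lemma shoulder_pos (H : IsAiryScale κ a b h p) : 0 < shoulder a b :=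
  H.crest_pos.trans_le H.crest_le_shoulder

lemma le_mul_tan_sq_of_shoulder_le (H : IsAiryScale κ a b h p) {w : ℝ} (hw : w ∈ Ioo 0 (π / 2))
    (hle : arctan (shoulder a b) ≤ w) : b + 1 / 2 ≤ a * tan w ^ 2 := by
  have ha := H.left_pos
  have hb := H.right_pos
  calc b + 1 / 2 ≤ b * (1 + 1 / (4 * b)) ^ 2 := by
        have : b * (1 + 1 / (4 * b)) ^ 2 = b + 1 / 2 + 1 / (16 * b) := by
          field_simp
          ring
        rw [this]
        exact le_add_of_nonneg_right (by positivity)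
    _ = a * shoulder a b ^ 2 := by
        rw [shoulder, mul_pow, ← mul_assoc, H.mul_crest_sq]
    _ ≤ a * tan w ^ 2 := by
        have := H.shoulder_pos
        gcongr
        exact le_tan_of_arctan_le H.shoulder_pos hw hle

lemma poschlTeller_tan_le_of_shoulder_le (H : IsAiryScale κ a b h p) {w z : ℝ}
    (hw : w ∈ Ioo 0 (π / 2)) (hz : z ∈ Ioo 0 (π / 2)) (hle : arctan (shoulder a b) ≤ w)
    (hwz : w ≤ z) : poschlTeller κ a b (tan z) ≤ poschlTeller κ a b (tan w) :=
  poschlTeller_le_poschlTeller H.left_pos.le H.right_pos.le (tan_pos_of_mem_Ioo_zero hw)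
    (by linarith [H.le_mul_tan_sq_of_shoulder_le hw hle]) (tan_le_tan_of_mem_Ioo_zero hw hz hwz)

lemma half_le_poschlTeller (H : IsAiryScale κ a b h p) {s t : ℝ} (hs : s ^ 2 = h ^ 3)
    (hs1 : 1 ≤ s) (hst : crest a b * (4 * b / (4 * b + s)) ≤ t) (ht : t ≤ shoulder a b) :
    κ / 2 ≤ poschlTeller κ a b t := by
  have ha := H.left_pos
  have hb := H.right_pos
  have hσ := H.crest_pos
  have hfrac : 4 * b / (4 * b + s) * (1 + s / (4 * b)) = 1 := by
    field_simp
  have hρ : 4 * b / (4 * b + s) ≤ t / crest a b := by rwa [le_div_iff₀' hσ]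
  have hρ0 : 0 < t / crest a b := lt_of_lt_of_le (by positivity) hρ
  have hQ := le_poschlTeller (κ := κ) hσ H.mul_crest_sq ha (ε := s / (4 * b)) (by positivity) hρ0
    (calc t / crest a b ≤ 1 + 1 / (4 * b) := by rwa [div_le_iff₀' hσ]
      _ ≤ 1 + s / (4 * b) := by gcongr)
    (calc 1 = 4 * b / (4 * b + s) * (1 + s / (4 * b)) := hfrac.symm
      _ ≤ t / crest a b * (1 + s / (4 * b)) := by gcongr)
  rw [mul_div_cancel₀ _ hσ.ne'] at hQ
  have hdrop : 4 * a * b * (s / (4 * b)) ^ 2 = κ / (4 * b) := by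
    rw [H.eq_mul_cube, ← hs]
    field_simp
  have : κ / (4 * b) ≤ κ / 2 := by
    have := H.height_pos
    gcongr
    linarith [H.half_le_right]
  linarith

-- On this interval left of the crest, `t √κ` is bounded while the potential is comparable to `κ`.
lemma exists_left_interval (H : IsAiryScale κ a b h p) : ∃ τ₁ τ₂ : ℝ, 0 < τ₁ ∧ τ₁ < τ₂ ∧
    τ₂ ≤ crest a b ∧ κ * τ₂ ^ 2 ≤ 64 * b ^ 3 ∧ 1 ≤ 225 * b * (κ * (τ₂ - τ₁) ^ 2) ∧
    ∀ t ∈ Icc τ₁ (shoulder a b), κ / 2 ≤ poschlTeller κ a b t := by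
  have hb := H.right_pos
  have hσ := H.crest_pos
  set s := √(h ^ 3)
  have hs : s ^ 2 = h ^ 3 := Real.sq_sqrt (pow_pos H.scale_pos 3).le
  have hs1 : 1 ≤ s := Real.one_le_sqrt.2 (one_le_pow₀ H.one_le)
  have : 0 < s := one_pos.trans_le hs1
  have hheight : κ * crest a b ^ 2 = b * s ^ 2 := by
    rw [H.eq_mul_cube, hs, mul_right_comm, H.mul_crest_sq]
  have hgap : crest a b * (8 * b / (8 * b + s)) - crest a b * (4 * b / (4 * b + s)) =
      crest a b * (4 * b * s / ((4 * b + s) * (8 * b + s))) := by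
    field_simp
    ring
  refine ⟨crest a b * (4 * b / (4 * b + s)), crest a b * (8 * b / (8 * b + s)), by positivity,
    ?_, ?_, ?_, ?_, fun t ht => H.half_le_poschlTeller hs hs1 ht.1 ht.2⟩
  · rw [← sub_pos, hgap]
    positivity
  · refine mul_le_of_le_one_right hσ.le ((div_le_one (by positivity)).2 (by linarith))
  · calc κ * (crest a b * (8 * b / (8 * b + s))) ^ 2
        = 64 * b ^ 3 * (s / (8 * b + s)) ^ 2 := by
          linear_combination (8 * b / (8 * b + s)) ^ 2 * hheight
      _ ≤ 64 * b ^ 3 := by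
          refine mul_le_of_le_one_right (by positivity) (pow_le_one₀ (by positivity) ?_)
          exact (div_le_one (by positivity)).2 (by linarith)
  · have hprod : (4 * b + s) * (8 * b + s) ≤ 6 * b * s * (10 * b * s) := by
      have hbs : b ≤ b * s := le_mul_of_one_le_right hb.le hs1
      have hsb : s ≤ 2 * (b * s) := by nlinarith [H.half_le_right]
      gcongr <;> linarith
    calc 1 ≤ (60 * b ^ 2 * s ^ 2 / ((4 * b + s) * (8 * b + s))) ^ 2 := by
          refine one_le_pow₀ ((one_le_div (by positivity)).2 (by linarith))
      _ = 225 * b * (b * s ^ 2 * (4 * b * s / ((4 * b + s) * (8 * b + s))) ^ 2) := by ring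
      _ = _ := by
          rw [hgap, ← hheight]
          ring

lemma exists_deriv_sq_le (H : IsAiryScale κ a b h p) (hu : IsPoschlTellerWave κ a b u v)
    (hM : ∀ w ∈ Ioo 0 (π / 2), κ * tan w ^ 2 ≤ 64 * b ^ 3 → |u w| ≤ M) :
    ∃ ξ ∈ Ioo 0 (arctan (crest a b)), κ * tan ξ ^ 2 ≤ 64 * b ^ 3 ∧
      (∀ w ∈ Icc ξ (arctan (shoulder a b)), κ / 2 ≤ poschlTeller κ a b (tan w)) ∧
      v ξ ^ 2 ≤ 900 * b * (1 + 2 * b) ^ 2 * M ^ 2 * κ := by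
  have hb := H.right_pos
  have hκ := H.height_pos
  obtain ⟨τ₁, τ₂, hτ₁, hτ, hcrest, hκτ, hgap, hhalf⟩ := H.exists_left_interval
  have hτ₂ : 0 < τ₂ := hτ₁.trans hτ
  have hsub := Icc_subset_Ioo_zero (arctan_mem_Ioo_zero hτ₁) (arctan_mem_Ioo_zero hτ₂)
  have hsmall : ∀ w ∈ Icc (arctan τ₁) (arctan τ₂), κ * tan w ^ 2 ≤ 64 * b ^ 3 := by
    intro w hw
    have := (tan_pos_of_mem_Ioo_zero (hsub hw)).le
    refine le_trans ?_ hκτ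
    gcongr
    exact tan_le_of_le_arctan hτ₂ (hsub hw) hw.2
  obtain ⟨ξ, hξ, hvξ⟩ := (hu.mono hsub).exists_deriv_le (arctan_strictMono hτ)
    fun w hw => hM w (hsub hw) (hsmall w hw)
  have hξ' := Ioo_subset_Icc_self hξ
  refine ⟨ξ, ⟨(hsub hξ').1, hξ.2.trans_le (arctan_mono hcrest)⟩, hsmall ξ hξ',
    fun w hw => ?_, ?_⟩
  · have hwI := Icc_subset_Ioo_zero (hsub hξ') (arctan_mem_Ioo_zero H.shoulder_pos) hw
    exact hhalf _ ⟨le_tan_of_arctan_le hτ₁ hwI (hξ.1.le.trans hw.1),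
      tan_le_of_le_arctan H.shoulder_pos hwI hw.2⟩
  · have hτ₁₂ := sub_pos.2 hτ
    have hM0 : 0 ≤ M := (abs_nonneg _).trans (hM ξ (hsub hξ') (hsmall ξ hξ'))
    have hwidth : (τ₂ - τ₁) / (1 + 2 * b) ≤ arctan τ₂ - arctan τ₁ := by
      refine le_trans ?_ (sub_div_le_arctan_sub_arctan hτ₁.le hτ)
      gcongr
      exact (pow_le_pow_left₀ hτ₂.le hcrest 2).trans H.crest_sq_le
    calc v ξ ^ 2 = |v ξ| ^ 2 := (sq_abs _).symm
      _ ≤ (2 * M / ((τ₂ - τ₁) / (1 + 2 * b))) ^ 2 := by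
          gcongr
          exact hvξ.trans (by gcongr)
      _ = 4 * (1 + 2 * b) ^ 2 * M ^ 2 * (1 / (τ₂ - τ₁) ^ 2) := by
          field_simp
          ring
      _ ≤ 4 * (1 + 2 * b) ^ 2 * M ^ 2 * (225 * b * κ) := by
          gcongr
          rw [div_le_iff₀ (by positivity), mul_assoc]
          exact hgap
      _ = 900 * b * (1 + 2 * b) ^ 2 * M ^ 2 * κ := by ring

end IsAiryScale

/-- The factor between the squared bound near the left end and the squared amplitude in the
oscillatory region. -/
noncomputable def soninConst (b : ℝ) : ℝ :=
  1 + 1800 * b * (1 + 2 * b) ^ 2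

/-- The factor between the squared amplitude in the oscillatory region, times `h`, and the squared
amplitude at the turning point. -/
noncomputable def airyConst (b p : ℝ) : ℝ :=
  16 * (1 + b) ^ 2 * (1 + airyShift b p) ^ 6

namespace IsAiryScale

lemma poschlTeller₁_nonneg_of_le (H : IsAiryScale κ a b h p) {w : ℝ} (hw : w ∈ Ioo 0 (π / 2))
    (hle : w ≤ arctan (crest a b)) : 0 ≤ poschlTeller₁ a b (tan w) := by
  have ha := H.left_pos
  have ht := tan_pos_of_mem_Ioo_zero hw
  refine poschlTeller₁_nonneg ha.le ht (le_of_le_of_eq ?_ H.mul_crest_sq)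
  gcongr
  exact tan_le_of_le_arctan H.crest_pos hw hle

lemma poschlTeller₁_nonpos_of_le (H : IsAiryScale κ a b h p) {w : ℝ} (hw : w ∈ Ioo 0 (π / 2))
    (hle : arctan (crest a b) ≤ w) : poschlTeller₁ a b (tan w) ≤ 0 := by
  have ha := H.left_pos
  refine poschlTeller₁_nonpos H.right_pos.le (tan_pos_of_mem_Ioo_zero hw)
    (le_of_eq_of_le H.mul_crest_sq.symm ?_)
  have := H.crest_pos
  gcongr
  exact le_tan_of_arctan_le H.crest_pos hw hle

lemma exists_energy_div_le (H : IsAiryScale κ a b h p) (hu : IsPoschlTellerWave κ a b u v)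
    (hM : ∀ w ∈ Ioo 0 (π / 2), κ * tan w ^ 2 ≤ 64 * b ^ 3 → |u w| ≤ M) :
    ∃ ξ ∈ Ioo 0 (arctan (crest a b)), (∀ w ∈ Ioc 0 ξ, u w ^ 2 ≤ M ^ 2) ∧
      (∀ w ∈ Icc ξ (arctan (shoulder a b)), κ / 2 ≤ poschlTeller κ a b (tan w)) ∧
      oscillatorEnergy (poschlTeller κ a b (tan ξ)) (u ξ) (v ξ) / poschlTeller κ a b (tan ξ) ≤
        soninConst b * M ^ 2 := by
  have hb := H.right_pos
  have hκ := H.height_pos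
  obtain ⟨ξ, hξ, hξM, hhalf, hvξ⟩ := H.exists_deriv_sq_le hu hM
  have hξI : ξ ∈ Ioo 0 (π / 2) := ⟨hξ.1, hξ.2.trans (arctan_lt_pi_div_two _)⟩
  have hleft : ∀ w ∈ Ioc 0 ξ, u w ^ 2 ≤ M ^ 2 := by
    intro w hw
    have hwI : w ∈ Ioo 0 (π / 2) := ⟨hw.1, hw.2.trans_lt hξI.2⟩
    have := tan_pos_of_mem_Ioo_zero hwI
    refine sq_le_sq.2 (le_trans (hM w hwI (le_trans ?_ hξM)) (le_abs_self M))
    gcongr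
    exact tan_le_tan_of_mem_Ioo_zero hwI hξI hw.2
  refine ⟨ξ, hξ, hleft, hhalf, ?_⟩
  have hQ := hhalf ξ ⟨le_rfl, hξ.2.le.trans (arctan_mono H.crest_le_shoulder)⟩
  rw [div_le_iff₀ (by linarith)]
  calc v ξ ^ 2 + poschlTeller κ a b (tan ξ) * u ξ ^ 2
      ≤ 1800 * b * (1 + 2 * b) ^ 2 * M ^ 2 * (κ / 2) + poschlTeller κ a b (tan ξ) * M ^ 2 := by
        exact add_le_add (by linarith) (mul_le_mul_of_nonneg_left (hleft ξ ⟨hξ.1, le_rfl⟩)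
          (by linarith))
    _ ≤ 1800 * b * (1 + 2 * b) ^ 2 * M ^ 2 * poschlTeller κ a b (tan ξ) +
        poschlTeller κ a b (tan ξ) * M ^ 2 := by gcongr
    _ = soninConst b * M ^ 2 * poschlTeller κ a b (tan ξ) := by
        unfold soninConst
        ring

lemma one_le_soninConst (H : IsAiryScale κ a b h p) : 1 ≤ soninConst b := by
  have := H.right_pos
  exact le_add_of_nonneg_right (by positivity)

lemma sq_le_and_energy_le_of_le_shoulder (H : IsAiryScale κ a b h p)
    (hu : IsPoschlTellerWave κ a b u v)
    (hM : ∀ w ∈ Ioo 0 (π / 2), κ * tan w ^ 2 ≤ 64 * b ^ 3 → |u w| ≤ M) :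
    (∀ w ∈ Ioc 0 (arctan (shoulder a b)), u w ^ 2 ≤ 2 * (soninConst b * M ^ 2)) ∧
      oscillatorEnergy (poschlTeller κ a b (shoulder a b)) (u (arctan (shoulder a b)))
        (v (arctan (shoulder a b))) ≤ κ * (soninConst b * M ^ 2) := by
  have hκ := H.height_pos
  obtain ⟨ξ, hξ, hleft, hhalf, hξE⟩ := H.exists_energy_div_le hu hM
  have hcrest := arctan_mono H.crest_le_shoulder
  have hξle : ξ ≤ arctan (shoulder a b) := hξ.2.le.trans hcrest
  have hsub := Icc_subset_Ioo_zero ⟨hξ.1, hξ.2.trans (arctan_lt_pi_div_two _)⟩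
    (arctan_mem_Ioo_zero H.shoulder_pos)
  have henergy : ∀ w ∈ Icc ξ (arctan (shoulder a b)),
      oscillatorEnergy (poschlTeller κ a b (tan w)) (u w) (v w) ≤ κ * (soninConst b * M ^ 2) :=
    fun w hw => ((hu.mono hsub).energy_le_of_crest
      (fun x hx => hasDerivAt_poschlTeller κ a b (hsub hx))
      (fun x hx => (half_pos hκ).trans_le (hhalf x hx)) (fun x _ => poschlTeller_le κ a b _)
      ⟨hξ.2.le, hcrest⟩
      (fun x hx => H.poschlTeller₁_nonneg_of_le (hsub ⟨hx.1, hx.2.trans hcrest⟩) hx.2)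
      (fun x hx => H.poschlTeller₁_nonpos_of_le (hsub ⟨hξ.2.le.trans hx.1, hx.2⟩) hx.1)
      hw).trans (by gcongr)
  refine ⟨fun w hw => ?_, by simpa using henergy _ ⟨hξle, le_rfl⟩⟩
  rcases le_total w ξ with hwξ | hξw
  · nlinarith [hleft w ⟨hw.1, hwξ⟩, H.one_le_soninConst, sq_nonneg M]
  · have hQu := mul_le_mul_of_nonneg_right (hhalf w ⟨hξw, hw.2⟩) (sq_nonneg (u w))
    have hE := henergy w ⟨hξw, hw.2⟩
    unfold oscillatorEnergy at hE
    refine le_of_mul_le_mul_left (a := κ) ?_ hκ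
    linarith [sq_nonneg (v w)]

lemma half_le_poschlTeller_shoulder (H : IsAiryScale κ a b h p) :
    κ / 2 ≤ poschlTeller κ a b (shoulder a b) := by
  obtain ⟨τ₁, τ₂, -, hτ, hcrest, -, -, hhalf⟩ := H.exists_left_interval
  exact hhalf _ ⟨hτ.le.trans (hcrest.trans H.crest_le_shoulder), le_rfl⟩

lemma adiabaticInvariant_le (H : IsAiryScale κ a b h p) {q q₁ q₂ q₃ x y : ℝ}
    (hslow : IsSlowShift (airyShift b p * (a * h)) q₁ q₂ q₃) (hq : κ / 2 ≤ q)
    (hE : oscillatorEnergy q x y ≤ κ * S) :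
    adiabaticInvariant (airyShift b p * (a * h)) q q₁ q₂ x y ≤
      4 * (1 + 2 * airyShift b p) * h * √(a * h) * S := by
  have ha := H.left_pos
  have hh := H.scale_pos
  have hκ := H.height_pos
  have hK := H.one_le_airyShift
  have : 0 < √(a * h) := Real.sqrt_pos.2 (by positivity)
  have hκg : κ = h ^ 2 * √(a * h) ^ 2 := by
    rw [Real.sq_sqrt (by positivity), H.eq_mul_cube]
    ring
  have hη : airyShift b p * (a * h) ≤ 2 * airyShift b p * q := by
    nlinarith [H.mul_le_height]
  have hshift : oscillatorEnergy (q + airyShift b p * (a * h)) x y ≤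
      (1 + 2 * airyShift b p) * (κ * S) := calc
    _ ≤ (1 + 2 * airyShift b p) * oscillatorEnergy q x y := by
        unfold oscillatorEnergy
        nlinarith [mul_le_mul_of_nonneg_right hη (sq_nonneg x), sq_nonneg y]
    _ ≤ (1 + 2 * airyShift b p) * (κ * S) := by gcongr
  have hroot : h * √(a * h) / 2 ≤ √(q + airyShift b p * (a * h)) := by
    refine Real.le_sqrt_of_sq_le ?_
    nlinarith [hslow.pos]
  have hE0 : 0 ≤ oscillatorEnergy (q + airyShift b p * (a * h)) x y := by
    have : 0 < q + airyShift b p * (a * h) := by linarith [hslow.pos]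
    unfold oscillatorEnergy
    positivity
  calc _ ≤ 2 * oscillatorEnergy (q + airyShift b p * (a * h)) x y /
        √(q + airyShift b p * (a * h)) := hslow.adiabaticInvariant_le (by linarith) x y
    _ ≤ 2 * ((1 + 2 * airyShift b p) * (κ * S)) / (h * √(a * h) / 2) :=
        div_le_div₀ (by linarith) (by linarith) (by positivity) hroot
    _ = 4 * (1 + 2 * airyShift b p) * h * √(a * h) * S := by
        rw [hκg]
        field_simp
        ring

lemma mul_sq_le_adiabaticInvariant (H : IsAiryScale κ a b h p) {t : ℝ} (ht : 0 < t)
    (hQ : 0 ≤ poschlTeller κ a b t) (hcrest : b + 1 / 2 ≤ a * t ^ 2) (x y : ℝ) :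
    √(a * h) * x ^ 2 ≤ 2 * (1 + b) ^ 2 * (1 + airyShift b p) ^ 5 *
      adiabaticInvariant (airyShift b p * (a * h)) (poschlTeller κ a b t) (poschlTeller₁ a b t)
        (poschlTeller₂ a b t) x y := by
  have ha := H.left_pos
  have hb := H.right_pos
  have hh := H.scale_pos
  have hK := H.one_le_airyShift
  have hg2 : √(a * h) ^ 2 = a * h := Real.sq_sqrt (by positivity)
  have hcoeff := le_mul_of_slope (Real.sqrt_pos.2 (by positivity : 0 < a * h)) hK
    (by linarith : 1 ≤ 1 + b) hQ (q₁ := poschlTeller₁ a b t) fun hlow => by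
      rw [show √(a * h) ^ 6 = (√(a * h) ^ 2) ^ 3 by ring, hg2]
      exact H.le_sq_poschlTeller₁ ht hcrest (by linarith [H.mul_le_height])
  rw [hg2] at hcoeff
  calc √(a * h) * x ^ 2 ≤ _ * x ^ 2 := mul_le_mul_of_nonneg_right hcoeff (sq_nonneg x)
    _ = _ := mul_assoc _ _ _
    _ ≤ _ := mul_le_mul_of_nonneg_left
        ((H.isSlowShift ht hQ hcrest).le_adiabaticInvariant hQ x y) (by positivity)

-- The adiabatic invariant carries the amplitude from the shoulder to the turning point.
lemma sq_le_of_nonneg (H : IsAiryScale κ a b h p) (hu : IsPoschlTellerWave κ a b u v)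
    (hS : oscillatorEnergy (poschlTeller κ a b (shoulder a b)) (u (arctan (shoulder a b)))
        (v (arctan (shoulder a b))) ≤ κ * S) (hS0 : 0 ≤ S) {z : ℝ} (hz : z ∈ Ioo 0 (π / 2))
    (hle : arctan (shoulder a b) ≤ z) (hQz : 0 ≤ poschlTeller κ a b (tan z)) :
    u z ^ 2 ≤ airyConst b p * h * S := by
  have ha := H.left_pos
  have hb := H.right_pos
  have hh := H.scale_pos
  have hK := H.one_le_airyShift
  have hsub := Icc_subset_Ioo_zero (arctan_mem_Ioo_zero H.shoulder_pos) hz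
  have hpast : ∀ w ∈ Icc (arctan (shoulder a b)) z, b + 1 / 2 ≤ a * tan w ^ 2 := fun w hw =>
    H.le_mul_tan_sq_of_shoulder_le (hsub hw) hw.1
  have hQ : ∀ w ∈ Icc (arctan (shoulder a b)) z, 0 ≤ poschlTeller κ a b (tan w) := fun w hw =>
    hQz.trans (H.poschlTeller_tan_le_of_shoulder_le (hsub hw) hz hw.1 hw.2)
  have hslow : ∀ w ∈ Icc (arctan (shoulder a b)) z, IsSlowShift (airyShift b p * (a * h))
      (poschlTeller₁ a b (tan w)) (poschlTeller₂ a b (tan w)) (poschlTeller₃ a b (tan w)) :=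
    fun w hw => H.isSlowShift (tan_pos_of_mem_Ioo_zero (hsub hw)) (hQ w hw) (hpast w hw)
  have hleft : arctan (shoulder a b) ∈ Icc (arctan (shoulder a b)) z := ⟨le_rfl, hle⟩
  have hinv := (hu.mono hsub).antitoneOn_adiabaticInvariant (convex_Icc _ z)
    (fun w hw => hasDerivAt_poschlTeller κ a b (hsub hw))
    (fun w hw => hasDerivAt_poschlTeller₁ a b (hsub hw))
    (fun w hw => hasDerivAt_poschlTeller₂ a b (hsub hw)) hQ hslow hleft ⟨hle, le_rfl⟩ hle
  have hstart := H.adiabaticInvariant_le (hslow _ hleft)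
    ((tan_arctan (shoulder a b)).symm ▸ H.half_le_poschlTeller_shoulder)
    (by rwa [tan_arctan])
  refine le_of_mul_le_mul_left (a := √(a * h)) ?_ (Real.sqrt_pos.2 (by positivity))
  calc √(a * h) * u z ^ 2 ≤ 2 * (1 + b) ^ 2 * (1 + airyShift b p) ^ 5 * _ :=
        H.mul_sq_le_adiabaticInvariant (tan_pos_of_mem_Ioo_zero hz) hQz
          (hpast z ⟨hle, le_rfl⟩) (u z) (v z)
    _ ≤ 2 * (1 + b) ^ 2 * (1 + airyShift b p) ^ 5 *
        (4 * (1 + 2 * airyShift b p) * h * √(a * h) * S) := by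
        gcongr _ * ?_
        exact hinv.trans hstart
    _ ≤ 2 * (1 + b) ^ 2 * (1 + airyShift b p) ^ 5 *
        (4 * (2 * (1 + airyShift b p)) * h * √(a * h) * S) := by
        gcongr
        linarith
    _ = √(a * h) * (airyConst b p * h * S) := by
        unfold airyConst
        ring

lemma two_le_airyConst_mul (H : IsAiryScale κ a b h p) : 2 ≤ airyConst b p * h := by
  have hB : 1 ≤ (1 + b) ^ 2 := one_le_pow₀ (by linarith [H.right_pos])
  have hK : 1 ≤ (1 + airyShift b p) ^ 6 := one_le_pow₀ (by linarith [H.one_le_airyShift])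
  have hBK := mul_le_mul hB hK zero_le_one (by positivity)
  have := mul_le_mul hBK H.one_le zero_le_one (by positivity)
  unfold airyConst
  linarith

lemma sq_le_of_shoulder_le (H : IsAiryScale κ a b h p) (hu : IsPoschlTellerWave κ a b u v)
    (hc : Continuous u) (h0 : u (π / 2) = 0)
    (hS : oscillatorEnergy (poschlTeller κ a b (shoulder a b)) (u (arctan (shoulder a b)))
        (v (arctan (shoulder a b))) ≤ κ * S) (hS0 : 0 ≤ S) {z : ℝ} (hz : z ∈ Ioo 0 (π / 2))
    (hle : arctan (shoulder a b) ≤ z) : u z ^ 2 ≤ airyConst b p * h * S := by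
  rcases le_total 0 (poschlTeller κ a b (tan z)) with hQz | hQz
  · exact H.sq_le_of_nonneg hu hS hS0 hz hle hQz
  have hsub := Icc_subset_Ioo_zero (arctan_mem_Ioo_zero H.shoulder_pos) hz
  obtain ⟨y, hy, hQy⟩ := intermediate_value_Icc' hle (f := fun w => poschlTeller κ a b (tan w))
    (fun w hw => (hasDerivAt_poschlTeller κ a b (hsub hw)).continuousAt.continuousWithinAt)
    ⟨hQz, by simpa using (half_pos H.height_pos).le.trans H.half_le_poschlTeller_shoulder⟩
  have hyI := hsub hy
  have hbeyond : ∀ w ∈ Ioo y (π / 2), poschlTeller κ a b (tan w) ≤ 0 := fun w hw =>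
    (H.poschlTeller_tan_le_of_shoulder_le hyI ⟨hyI.1.trans hw.1, hw.2⟩ hy.1 hw.1.le).trans_eq hQy
  calc u z ^ 2 ≤ u y ^ 2 := (hu.mono (Ioo_subset_Ioo_left hyI.1.le)).sq_le_sq_of_nonpos
        hc.continuousOn hbeyond h0 ⟨hy.2, hz.2.le⟩
    _ ≤ airyConst b p * h * S := H.sq_le_of_nonneg hu hS hS0 hyI hy.1 hQy.ge

theorem sq_le (H : IsAiryScale κ a b h p) (hu : IsPoschlTellerWave κ a b u v)
    (hc : Continuous u) (h0 : u (π / 2) = 0)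
    (hM : ∀ w ∈ Ioo 0 (π / 2), κ * tan w ^ 2 ≤ 64 * b ^ 3 → |u w| ≤ M) {w : ℝ}
    (hw : w ∈ Ioo 0 (π / 2)) : u w ^ 2 ≤ airyConst b p * h * (soninConst b * M ^ 2) := by
  obtain ⟨hbefore, hS⟩ := H.sq_le_and_energy_le_of_le_shoulder hu hM
  have hS0 : 0 ≤ soninConst b * M ^ 2 :=
    mul_nonneg (zero_le_one.trans H.one_le_soninConst) (sq_nonneg M)
  rcases le_total w (arctan (shoulder a b)) with hle | hle
  · exact (hbefore w ⟨hw.1, hle⟩).trans (mul_le_mul_of_nonneg_right H.two_le_airyConst_mul hS0)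
  · exact H.sq_le_of_shoulder_le hu hc h0 hS hS0 hw hle

end IsAiryScale

end TurningPoint

section Jacobi

lemma genChoose_zero (t : ℝ) : genChoose t 0 = 1 := by
  simp [genChoose]

lemma genChoose_succ (t : ℝ) (j : ℕ) :
    genChoose t (j + 1) * (j + 1) = genChoose t j * (t - j) := by
  have := Nat.cast_add_one_ne_zero (R := ℝ) j
  simp only [genChoose, Finset.prod_range_succ, Nat.factorial_succ, Nat.cast_mul, Nat.cast_succ]
  field_simp

lemma genChoose_succ' (t : ℝ) (j : ℕ) :
    genChoose (t + 1) (j + 1) * (j + 1) = genChoose t j * (t + 1) := by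
  have := Nat.cast_add_one_ne_zero (R := ℝ) j
  simp only [genChoose, Finset.prod_range_succ', Nat.factorial_succ, Nat.cast_mul, Nat.cast_succ,
    add_sub_add_right_eq_sub, Nat.cast_zero, sub_zero]
  field_simp

lemma genChoose_nonneg {β : ℝ} (hβ : 0 ≤ β) (n : ℕ) : 0 ≤ genChoose (n + β) n := by
  refine div_nonneg (Finset.prod_nonneg fun i hi => ?_) (Nat.cast_nonneg _)
  have : (i : ℝ) ≤ n := Nat.cast_le.2 (Finset.mem_range.1 hi).le
  linarith

lemma genChoose_le_rpow {β : ℝ} (hβ : 1 ≤ β) (n : ℕ) : genChoose (n + β) n ≤ (n + 1 : ℝ) ^ β := by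
  induction n with
  | zero => simp [genChoose_zero]
  | succ n ih =>
    have hm : (0 : ℝ) < n + 1 := by positivity
    have hbernoulli : 1 + β * (1 / (n + 1)) ≤ (1 + 1 / (n + 1 : ℝ)) ^ β :=
      one_add_mul_self_le_rpow_one_add (by linarith [one_div_pos.2 hm]) hβ
    have hsucc := genChoose_succ' (n + β) n
    push_cast
    calc genChoose (n + 1 + β) (n + 1)
        = genChoose (n + β) n * (1 + β * (1 / (n + 1))) := by
          rw [← eq_div_iff hm.ne'] at hsucc
          rw [add_right_comm, hsucc]
          field_simp
          ring
      _ ≤ (n + 1 : ℝ) ^ β * (1 + 1 / (n + 1 : ℝ)) ^ β := by gcongr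
      _ = (n + 1 + 1 : ℝ) ^ β := by
          rw [← mul_rpow hm.le (by positivity)]
          field_simp

/-- The coefficients of the Jacobi polynomial in the basis
`((1 - x) / 2) ^ s * ((1 + x) / 2) ^ (n - s)`. -/
noncomputable def jacobiCoeff (α β : ℝ) (n s : ℕ) : ℝ :=
  (-1) ^ s * (genChoose (n + α) (n - s) * genChoose (n + β) s)

lemma jacobiCoeff_succ (α β : ℝ) {n s : ℕ} (hs : s < n) :
    jacobiCoeff α β n (s + 1) * ((s + 1) * (α + (s + 1))) =
      -(jacobiCoeff α β n s * ((n - s) * (β + (n - s)))) := by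
  obtain ⟨j, rfl⟩ := Nat.exists_eq_add_of_lt hs
  have hα := genChoose_succ (((s + j + 1 : ℕ) : ℝ) + α) j
  have hβ := genChoose_succ (((s + j + 1 : ℕ) : ℝ) + β) s
  simp only [jacobiCoeff, show s + j + 1 - (s + 1) = j by lia, show s + j + 1 - s = j + 1 by lia]
  push_cast at hα hβ ⊢
  linear_combination
    (-1) ^ (s + 1) * genChoose (s + j + 1 + β) (s + 1) * (s + 1) * -hα +
    (-1) ^ (s + 1) * genChoose (s + j + 1 + α) (j + 1) * (j + 1) * hβ

lemma abs_jacobiCoeff_succ {α β : ℝ} (hα : 0 ≤ α) (hβ : 0 ≤ β) {n s : ℕ} (hs : s < n) :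
    |jacobiCoeff α β n (s + 1)| * ((s + 1) * (α + (s + 1))) =
      |jacobiCoeff α β n s| * ((n - s) * (β + (n - s))) := by
  have hns : (0 : ℝ) ≤ n - s := sub_nonneg.2 (Nat.cast_le.2 hs.le)
  rw [← abs_of_nonneg (show 0 ≤ (s + 1) * (α + (s + 1)) by positivity),
    ← abs_of_nonneg (show 0 ≤ (n - s) * (β + (n - s)) by positivity), ← abs_mul, ← abs_mul,
    jacobiCoeff_succ α β hs, abs_neg]

lemma abs_jacobiCoeff_le {α β : ℝ} (hα : 0 ≤ α) (hβ : 1 ≤ β) {n j : ℕ} (hj : j ≤ n) :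
    |jacobiCoeff α β n (n - j)| ≤ (n + 1 : ℝ) ^ β * ((n * (n + α)) ^ j / j.factorial) := by
  induction j with
  | zero =>
    simp only [jacobiCoeff, tsub_zero, tsub_self, genChoose_zero, one_mul, abs_mul, abs_pow,
      abs_neg, abs_one, one_pow, pow_zero, Nat.factorial_zero, Nat.cast_one, div_one, mul_one]
    rw [abs_of_nonneg (genChoose_nonneg (by linarith) n)]
    exact genChoose_le_rpow hβ n
  | succ j ih =>
    obtain ⟨s, rfl⟩ := Nat.exists_eq_add_of_le' hj
    specialize ih (by lia)
    rw [show s + (j + 1) - j = s + 1 by lia] at ih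
    have hrec := abs_jacobiCoeff_succ hα (by linarith : 0 ≤ β) (show s < s + (j + 1) by lia)
    rw [Nat.add_sub_cancel, ← mul_le_mul_iff_left₀ (Nat.cast_add_one_pos (α := ℝ) j)]
    push_cast at hrec ih ⊢
    rw [add_sub_cancel_left] at hrec
    calc |jacobiCoeff α β (s + (j + 1)) s| * (j + 1)
        ≤ |jacobiCoeff α β (s + (j + 1)) s| * ((j + 1) * (β + (j + 1))) := by
          gcongr
          exact le_mul_of_one_le_right (by positivity) (by linarith [j.cast_nonneg (α := ℝ)])
      _ = |jacobiCoeff α β (s + (j + 1)) (s + 1)| * ((s + 1) * (α + (s + 1))) := hrec.symm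
      _ ≤ (s + (j + 1) + 1 : ℝ) ^ β * (((s + (j + 1)) * (s + (j + 1) + α)) ^ j / j.factorial) *
          ((s + (j + 1)) * (s + (j + 1) + α)) := by
          gcongr ?_ * (?_ * ?_) <;> linarith [j.cast_nonneg (α := ℝ)]
      _ = _ := by
          rw [pow_succ, Nat.factorial_succ]
          push_cast
          field_simp

/-- The weight `cos ^ μ * sin ^ ν`. -/
noncomputable def trigPow (μ ν w : ℝ) : ℝ :=
  cos w ^ μ * sin w ^ ν

lemma sin_pos_of_mem_Ioo_zero {w : ℝ} (hw : w ∈ Ioo 0 (π / 2)) : 0 < sin w :=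
  sin_pos_of_pos_of_lt_pi hw.1 (by linarith [hw.2, pi_pos])

lemma hasDerivAt_trigPow (μ ν : ℝ) {w : ℝ} (hw : w ∈ Ioo 0 (π / 2)) :
    HasDerivAt (trigPow μ ν) (trigPow μ ν w * (ν / tan w - μ * tan w)) w := by
  have hc := cos_pos_of_mem_Ioo_zero hw
  have hs := sin_pos_of_mem_Ioo_zero hw
  refine (((hasDerivAt_cos w).rpow_const (p := μ) (Or.inl hc.ne')).mul
    ((hasDerivAt_sin w).rpow_const (p := ν) (Or.inl hs.ne'))).congr_deriv ?_
  rw [trigPow, Real.tan_eq_sin_div_cos, rpow_sub_one hc.ne', rpow_sub_one hs.ne']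
  field_simp
  ring

lemma hasDerivAt_trigPow_mul (μ ν : ℝ) {w : ℝ} (hw : w ∈ Ioo 0 (π / 2)) :
    HasDerivAt (fun w => trigPow μ ν w * (ν / tan w - μ * tan w))
      (trigPow μ ν w * (μ * (μ - 1) * (1 + tan w ^ 2) + ν * (ν - 1) * (1 + 1 / tan w ^ 2)
        - (μ + ν) ^ 2)) w := by
  have ht := (tan_pos_of_mem_Ioo_zero hw).ne'
  have htan := hasDerivAt_tan_sq hw
  refine ((hasDerivAt_trigPow μ ν hw).fun_mul
    (((hasDerivAt_const w ν).fun_div htan ht).fun_sub (htan.const_mul μ))).congr_deriv ?_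
  field_simp
  ring

lemma trigPow_add_two (μ ν : ℝ) {w : ℝ} (hw : w ∈ Ioo 0 (π / 2)) :
    trigPow μ (ν + 2) w = trigPow (μ + 2) ν w * tan w ^ 2 := by
  have hc := cos_pos_of_mem_Ioo_zero hw
  rw [trigPow, trigPow, rpow_add (sin_pos_of_mem_Ioo_zero hw), rpow_add hc,
    Real.tan_eq_sin_div_cos, rpow_two, rpow_two]
  field_simp

lemma abs_trigPow_le {μ ν w : ℝ} (hμ : 0 ≤ μ) (hν : 0 ≤ ν) (hw : w ∈ Ioo 0 (π / 2)) :
    |trigPow μ ν w| ≤ tan w ^ ν := by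
  have hc := cos_pos_of_mem_Ioo_zero hw
  have hs := sin_pos_of_mem_Ioo_zero hw
  have hsin : sin w ≤ tan w := by
    rw [tan_eq_sin_div_cos]
    exact le_div_self hs.le hc (cos_le_one w)
  rw [trigPow, abs_of_pos (by positivity)]
  calc cos w ^ μ * sin w ^ ν ≤ 1 * tan w ^ ν := by
        gcongr
        exact rpow_le_one hc.le (cos_le_one w) hμ
    _ = tan w ^ ν := one_mul _

/-- The weighted Jacobi polynomial at `x = -cos (2 w)`. -/
noncomputable def jacobiWave (α β : ℝ) (n : ℕ) (w : ℝ) : ℝ :=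
  ∑ s ∈ Finset.range (n + 1),
    jacobiCoeff α β n s * trigPow (α + 1 / 2 + 2 * s) (β + 1 / 2 + 2 * (n - s)) w

/-- The derivative of `jacobiWave` on `(0, π / 2)`. -/
noncomputable def jacobiWaveDeriv (α β : ℝ) (n : ℕ) (w : ℝ) : ℝ :=
  ∑ s ∈ Finset.range (n + 1), jacobiCoeff α β n s *
    (trigPow (α + 1 / 2 + 2 * s) (β + 1 / 2 + 2 * (n - s)) w *
      ((β + 1 / 2 + 2 * (n - s)) / tan w - (α + 1 / 2 + 2 * s) * tan w))

lemma sum_jacobiCoeff_mul_eq_zero (α β : ℝ) (n : ℕ) {T : ℕ → ℝ} {r : ℝ}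
    (hT : ∀ s, T s = T (s + 1) * r) (hr : r ≠ 0) :
    ∑ s ∈ Finset.range (n + 1), (jacobiCoeff α β n s * (s * (α + s)) * T s +
      jacobiCoeff α β n s * ((n - s) * (β + (n - s))) * (T s / r)) = 0 := by
  rw [Finset.sum_add_distrib, Finset.sum_range_succ', Finset.sum_range_succ (fun s =>
    jacobiCoeff α β n s * (((n : ℝ) - s) * (β + (n - s))) * (T s / r))]
  simp only [Nat.cast_zero, zero_mul, mul_zero, add_zero, sub_self]
  rw [← Finset.sum_add_distrib, Finset.sum_eq_zero]
  intro s hs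
  rw [hT s, mul_div_cancel_right₀ _ hr]
  push_cast
  linear_combination T (s + 1) * jacobiCoeff_succ α β (Finset.mem_range.1 hs)

lemma isPoschlTellerWave_jacobiWave {α β a b : ℝ} (ha : a ^ 2 = α ^ 2 - 1 / 4)
    (hb : b ^ 2 = β ^ 2 - 1 / 4) (n : ℕ) :
    IsPoschlTellerWave ((2 * n + α + β + 1) ^ 2 - (a + b) ^ 2) a b (jacobiWave α β n)
      (jacobiWaveDeriv α β n) := by
  refine ⟨fun w hw => HasDerivAt.fun_sum fun _ _ => (hasDerivAt_trigPow _ _ hw).const_mul _,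
    fun w hw => ?_⟩
  have ht := (tan_pos_of_mem_Ioo_zero hw).ne'
  refine (HasDerivAt.fun_sum fun (s : ℕ) _ => (hasDerivAt_trigPow_mul (α + 1 / 2 + 2 * s)
    (β + 1 / 2 + 2 * (n - s)) hw).const_mul (jacobiCoeff α β n s)).congr_deriv ?_
  have hcancel := sum_jacobiCoeff_mul_eq_zero α β n (r := tan w ^ 2)
    (T := fun s => trigPow (α + 1 / 2 + 2 * s) (β + 1 / 2 + 2 * (n - s)) w) (fun s => by
      convert trigPow_add_two (α + 1 / 2 + 2 * s) (β + 1 / 2 + 2 * (n - (s + 1))) hw using 2 <;>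
      · push_cast
        ring_nf) (pow_ne_zero 2 ht)
  have hpot : poschlTeller ((2 * n + α + β + 1) ^ 2 - (a + b) ^ 2) a b (tan w) =
      (2 * n + α + β + 1) ^ 2 - (α ^ 2 - 1 / 4) * (1 + tan w ^ 2) -
        (β ^ 2 - 1 / 4) * (1 + 1 / tan w ^ 2) := by
    rw [← ha, ← hb, poschlTeller]
    field_simp
    ring
  have hcancel' := congrArg (4 * (1 + tan w ^ 2) * ·) hcancel
  simp only [Finset.mul_sum, mul_zero] at hcancel'
  rw [← sub_eq_zero, hpot, jacobiWave, Finset.mul_sum, ← Finset.sum_sub_distrib, ← hcancel']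
  refine Finset.sum_congr rfl fun s _ => ?_
  field_simp
  ring

lemma continuous_jacobiWave {α β : ℝ} (hα : 0 ≤ α) (hβ : 0 ≤ β) (n : ℕ) :
    Continuous (jacobiWave α β n) := by
  refine continuous_finsetSum _ fun s hs => continuous_const.mul ?_
  have hs' : (s : ℝ) ≤ n := Nat.cast_le.2 (Finset.mem_range_succ_iff.1 hs)
  exact (continuous_cos.rpow_const fun _ => Or.inr (by positivity)).mul
    (continuous_sin.rpow_const fun _ => Or.inr (by linarith))

lemma jacobiWave_pi_div_two {α : ℝ} (hα : 0 ≤ α) (β : ℝ) (n : ℕ) :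
    jacobiWave α β n (π / 2) = 0 := by
  refine Finset.sum_eq_zero fun s _ => ?_
  rw [trigPow, cos_pi_div_two, zero_rpow (by positivity), zero_mul, mul_zero]

lemma rpow_add_two_mul_natCast {x : ℝ} (hx : 0 ≤ x) {γ : ℝ} (hγ : 0 ≤ γ) (k : ℕ) :
    x ^ (γ + 1 / 2 + 2 * k) = (x ^ 2) ^ (γ / 2 + 1 / 4) * (x ^ 2) ^ k := by
  rw [rpow_add_of_nonneg hx (by positivity) (by positivity), rpow_mul hx, rpow_natCast, rpow_two,
    ← rpow_natCast_mul hx]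
  push_cast
  ring_nf

lemma jacobiWave_eq {α β : ℝ} (hα : 0 ≤ α) (hβ : 0 ≤ β) (n : ℕ) {w : ℝ}
    (hw : w ∈ Icc 0 (π / 2)) :
    jacobiWave α β n w = (cos w ^ 2) ^ (α / 2 + 1 / 4) * (sin w ^ 2) ^ (β / 2 + 1 / 4) *
      jacobi α β n (2 * sin w ^ 2 - 1) := by
  have hc : 0 ≤ cos w := cos_nonneg_of_mem_Icc ⟨by linarith [hw.1, pi_pos], hw.2⟩
  have hs : 0 ≤ sin w := sin_nonneg_of_mem_Icc ⟨hw.1, by linarith [hw.2, pi_pos]⟩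
  have hleft : (2 * sin w ^ 2 - 1 - 1) / 2 = -1 * cos w ^ 2 := by
    rw [cos_sq']
    ring
  have hright : (2 * sin w ^ 2 - 1 + 1) / 2 = sin w ^ 2 := by ring
  rw [jacobiWave, jacobi, Finset.mul_sum, hleft, hright]
  refine Finset.sum_congr rfl fun s hsn => ?_
  rw [trigPow, ← Nat.cast_sub (Finset.mem_range_succ_iff.1 hsn),
    rpow_add_two_mul_natCast hc hα, rpow_add_two_mul_natCast hs hβ, jacobiCoeff, mul_pow]
  ring

lemma abs_jacobiWave_le {α β : ℝ} (hα : 0 ≤ α) (hβ : 1 ≤ β) (n : ℕ) {w : ℝ}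
    (hw : w ∈ Ioo 0 (π / 2)) :
    |jacobiWave α β n w| ≤
      (n + 1 : ℝ) ^ β * tan w ^ (β + 1 / 2) * exp (n * (n + α) * tan w ^ 2) := by
  have ht := tan_pos_of_mem_Ioo_zero hw
  rw [jacobiWave, ← Finset.sum_range_reflect]
  calc _ ≤ ∑ j ∈ Finset.range (n + 1), (n + 1 : ℝ) ^ β * tan w ^ (β + 1 / 2) *
        ((n * (n + α) * tan w ^ 2) ^ j / j.factorial) := by
        refine (Finset.abs_sum_le_sum_abs _ _).trans (Finset.sum_le_sum fun j hj => ?_)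
        have hjn : j ≤ n := Finset.mem_range_succ_iff.1 hj
        have hjn' : (j : ℝ) ≤ n := Nat.cast_le.2 hjn
        rw [abs_mul, Nat.add_sub_cancel, Nat.cast_sub hjn]
        calc _ ≤ (n + 1 : ℝ) ^ β * ((n * (n + α)) ^ j / j.factorial) *
              tan w ^ (β + 1 / 2 + 2 * (n - (n - j))) := by
              gcongr
              · exact abs_jacobiCoeff_le hα hβ hjn
              · exact abs_trigPow_le (by linarith) (by linarith [j.cast_nonneg (α := ℝ)]) hw
          _ = _ := by
              rw [sub_sub_cancel, rpow_add ht, rpow_mul ht.le, rpow_natCast, rpow_two,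
                mul_pow _ (tan w ^ 2)]
              ring
    _ ≤ _ := by
        rw [← Finset.mul_sum]
        gcongr
        exact sum_le_exp_of_nonneg (by positivity) _

end Jacobi

section Scale

/-- The parameter `a` with `a² = α² - 1/4`, which is the coefficient of the Pöschl–Teller potential
of a Jacobi wave. -/
noncomputable def liouvilleParam (α : ℝ) : ℝ :=
  √(α ^ 2 - 1 / 4)

/-- The height of the Pöschl–Teller potential of a Jacobi wave. -/
noncomputable def jacobiHeight (α β : ℝ) (n : ℕ) : ℝ :=
  (2 * n + α + β + 1) ^ 2 - (liouvilleParam α + liouvilleParam β) ^ 2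

/-- The scale `h` with `κ = a h³` of a Jacobi wave. -/
noncomputable def jacobiScale (α β : ℝ) (n : ℕ) : ℝ :=
  (jacobiHeight α β n / liouvilleParam α) ^ (1 / 3 : ℝ)

/-- The factor between the height of the potential of a Jacobi wave and `(n + 1) α`, when
`n + 1 ≤ p α`. -/
def heightConst (β p : ℝ) : ℝ :=
  4 * p + 6 * β + 4

/-- The factor in the bound for Jacobi waves near the left end, when `n + 1 ≤ p α`. -/
noncomputable def leftConst (β p : ℝ) : ℝ :=
  (32 * liouvilleParam β ^ 3) ^ (β / 2 + 1 / 4) * exp ((1 + p) * (32 * liouvilleParam β ^ 3))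

/-- The factor in the bound for Jacobi waves with `n + 1 ≤ p α`. -/
noncomputable def jacobiConst (β p : ℝ) : ℝ :=
  √(airyConst (liouvilleParam β) (4 * heightConst β p * p) * soninConst (liouvilleParam β) *
    (2 * heightConst β p) ^ (1 / 3 : ℝ)) * leftConst β p

variable {α β p : ℝ} {n : ℕ}

lemma liouvilleParam_sq (hα : 1 ≤ α) : liouvilleParam α ^ 2 = α ^ 2 - 1 / 4 :=
  Real.sq_sqrt (by nlinarith)

lemma liouvilleParam_le (hα : 0 ≤ α) : liouvilleParam α ≤ α :=
  Real.sqrt_le_iff.2 ⟨hα, by linarith⟩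

lemma le_two_mul_liouvilleParam (hα : 1 ≤ α) : α ≤ 2 * liouvilleParam α := by
  have : α / 2 ≤ liouvilleParam α := Real.le_sqrt_of_sq_le (by nlinarith)
  linarith

lemma liouvilleParam_pos (hα : 1 ≤ α) : 0 < liouvilleParam α := by
  linarith [le_two_mul_liouvilleParam hα]

lemma le_jacobiHeight (hα : 1 ≤ α) (hβ : 1 ≤ β) (n : ℕ) :
    2 * ((n + 1) * (α + 1)) ≤ jacobiHeight α β n := by
  have hab : (liouvilleParam α + liouvilleParam β) ^ 2 ≤ (α + β) ^ 2 := by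
    have := liouvilleParam_pos hα
    have := liouvilleParam_pos hβ
    gcongr <;> exact liouvilleParam_le (by linarith)
  unfold jacobiHeight
  nlinarith [n.cast_nonneg (α := ℝ), mul_nonneg (n.cast_nonneg (α := ℝ)) (by linarith : 0 ≤ α + β)]

lemma nonneg_of_le_mul (hα : 1 ≤ α) (hp : n + 1 ≤ p * α) : 0 ≤ p :=
  nonneg_of_mul_nonneg_left (le_trans (by positivity) hp) (by linarith)

lemma heightConst_nonneg (hβ : 1 ≤ β) (hp : 0 ≤ p) : 0 ≤ heightConst β p := by
  unfold heightConst
  positivity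

lemma jacobiHeight_le (hα : 1 ≤ α) (hβ : 1 ≤ β) (hp : n + 1 ≤ p * α) :
    jacobiHeight α β n ≤ heightConst β p * ((n + 1) * α) := by
  have hab := mul_pos (liouvilleParam_pos hα) (liouvilleParam_pos hβ)
  have hα2 := liouvilleParam_sq hα
  have hβ2 := liouvilleParam_sq hβ
  have := n.cast_nonneg (α := ℝ)
  have hm := mul_le_mul_of_nonneg_left hp (by positivity : (0 : ℝ) ≤ n + 1)
  have hβα : (n + 1) * β ≤ (n + 1) * β * α := le_mul_of_one_le_right (by positivity) hα
  have hαβ : α * β ≤ (n + 1) * (α * β) := le_mul_of_one_le_left (by positivity) (by linarith)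
  unfold jacobiHeight heightConst
  nlinarith

lemma jacobiScale_pow (hα : 1 ≤ α) (hβ : 1 ≤ β) (n : ℕ) :
    jacobiScale α β n ^ 3 = jacobiHeight α β n / liouvilleParam α := by
  have := liouvilleParam_pos hα
  have hκ := le_jacobiHeight hα hβ n
  have : 0 ≤ jacobiHeight α β n := le_trans (by positivity) hκ
  rw [jacobiScale, ← rpow_mul_natCast (by positivity)]
  norm_num

lemma jacobiHeight_div_le (hα : 1 ≤ α) (hβ : 1 ≤ β) (hp : n + 1 ≤ p * α) :
    jacobiHeight α β n / liouvilleParam α ≤ 2 * heightConst β p * (n + 1) := by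
  have hp0 := nonneg_of_le_mul hα hp
  have hR := heightConst_nonneg hβ hp0
  rw [div_le_iff₀ (liouvilleParam_pos hα)]
  calc jacobiHeight α β n ≤ heightConst β p * ((n + 1) * α) := jacobiHeight_le hα hβ hp
    _ ≤ heightConst β p * ((n + 1) * (2 * liouvilleParam α)) := by
        gcongr
        exact le_two_mul_liouvilleParam hα
    _ = _ := by ring

lemma isAiryScale_jacobi (hα : 1 ≤ α) (hβ : 1 ≤ β) (hp : n + 1 ≤ p * α) :
    IsAiryScale (jacobiHeight α β n) (liouvilleParam α) (liouvilleParam β) (jacobiScale α β n)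
      (4 * heightConst β p * p) where
  half_le_left := by linarith [le_two_mul_liouvilleParam hα]
  half_le_right := by linarith [le_two_mul_liouvilleParam hβ]
  one_le := by
    refine one_le_rpow ((one_le_div (liouvilleParam_pos hα)).2 ?_) (by norm_num)
    calc liouvilleParam α ≤ 1 * (α + 1) := by linarith [liouvilleParam_le (by linarith : 0 ≤ α)]
      _ ≤ 2 * ((n + 1) * (α + 1)) := by nlinarith [n.cast_nonneg (α := ℝ)]
      _ ≤ jacobiHeight α β n := le_jacobiHeight hα hβ n
  eq_mul_cube := by
    rw [jacobiScale_pow hα hβ, mul_div_cancel₀ _ (liouvilleParam_pos hα).ne']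
  cube_le := by
    have hp0 := nonneg_of_le_mul hα hp
    have hR := heightConst_nonneg hβ hp0
    calc jacobiScale α β n ^ 3 = jacobiHeight α β n / liouvilleParam α := jacobiScale_pow hα hβ n
      _ ≤ 2 * heightConst β p * (n + 1) := jacobiHeight_div_le hα hβ hp
      _ ≤ 2 * heightConst β p * (p * (2 * liouvilleParam α)) := by
          gcongr
          exact hp.trans (by gcongr; exact le_two_mul_liouvilleParam hα)
      _ = 4 * heightConst β p * p * liouvilleParam α := by ring

lemma jacobiScale_le (hα : 1 ≤ α) (hβ : 1 ≤ β) (hp : n + 1 ≤ p * α) :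
    jacobiScale α β n ≤ (2 * heightConst β p) ^ (1 / 3 : ℝ) * (n + 1 : ℝ) ^ (1 / 3 : ℝ) := by
  have H := isAiryScale_jacobi hα hβ hp
  have := H.left_pos
  have := H.height_pos
  have hp0 := nonneg_of_le_mul hα hp
  have hR := heightConst_nonneg hβ hp0
  rw [← mul_rpow (by positivity) (by positivity)]
  exact rpow_le_rpow (by positivity) (jacobiHeight_div_le hα hβ hp) (by norm_num)

lemma rpow_mul_rpow_add_half {m r t : ℝ} (hm : 0 < m) (hr : 0 < r) (ht : 0 < t) (γ : ℝ) :
    m ^ γ * t ^ (γ + 1 / 2) =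
      (r * m * t ^ 2) ^ (γ / 2 + 1 / 4) * (m ^ (-(1 / 2) : ℝ) * (m / r) ^ (γ / 2 + 1 / 4)) := by
  have hsq : (m * t) ^ (γ + 1 / 2) = (r * m * t ^ 2 * (m / r)) ^ (γ / 2 + 1 / 4) := by
    rw [show γ + 1 / 2 = 2 * (γ / 2 + 1 / 4) by ring, rpow_mul (by positivity), rpow_two]
    field_simp
  calc m ^ γ * t ^ (γ + 1 / 2) = m ^ (-(1 / 2) : ℝ) * (m * t) ^ (γ + 1 / 2) := by
        rw [mul_rpow hm.le ht.le, ← mul_assoc, ← rpow_add hm]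
        ring_nf
    _ = _ := by
        rw [hsq, mul_rpow (by positivity) (by positivity)]
        ring

lemma abs_jacobiWave_le_of_tan_sq_le (hα : 1 ≤ α) (hβ : 1 ≤ β) (hp : n + 1 ≤ p * α) {T w : ℝ}
    (hw : w ∈ Ioo 0 (π / 2)) (hT : (α + 1) * (n + 1) * tan w ^ 2 ≤ T) :
    |jacobiWave α β n w| ≤ T ^ (β / 2 + 1 / 4) * exp ((1 + p) * T) *
      ((n + 1 : ℝ) ^ (-(1 / 2) : ℝ) * ((n + 1) / (α + 1)) ^ (β / 2 + 1 / 4)) := by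
  have ht := tan_pos_of_mem_Ioo_zero hw
  have hp0 := nonneg_of_le_mul hα hp
  have : 0 < α := by linarith
  have hT0 : 0 ≤ T := le_trans (by positivity) hT
  have hexp : n * (n + α) * tan w ^ 2 ≤ (1 + p) * T := calc
    n * (n + α) * tan w ^ 2 ≤ (n + 1) * ((1 + p) * (α + 1)) * tan w ^ 2 := by
        gcongr
        · linarith
        · nlinarith
    _ = (1 + p) * ((α + 1) * (n + 1) * tan w ^ 2) := by ring
    _ ≤ (1 + p) * T := by gcongr
  calc |jacobiWave α β n w|
      ≤ (n + 1 : ℝ) ^ β * tan w ^ (β + 1 / 2) * exp (n * (n + α) * tan w ^ 2) :=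
        abs_jacobiWave_le (by linarith) hβ n hw
    _ = ((α + 1) * (n + 1) * tan w ^ 2) ^ (β / 2 + 1 / 4) *
          ((n + 1 : ℝ) ^ (-(1 / 2) : ℝ) * ((n + 1) / (α + 1)) ^ (β / 2 + 1 / 4)) *
          exp (n * (n + α) * tan w ^ 2) := by
        rw [rpow_mul_rpow_add_half (by positivity) (by linarith : 0 < α + 1) ht]
    _ ≤ T ^ (β / 2 + 1 / 4) *
          ((n + 1 : ℝ) ^ (-(1 / 2) : ℝ) * ((n + 1) / (α + 1)) ^ (β / 2 + 1 / 4)) *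
          exp ((1 + p) * T) := by gcongr
    _ = _ := by ring

lemma jacobiConst_pos (hβ : 1 ≤ β) (hp : 0 ≤ p) : 0 < jacobiConst β p := by
  have := liouvilleParam_pos hβ
  unfold jacobiConst leftConst airyConst airyShift soninConst heightConst
  positivity

lemma abs_jacobiWave_le_leftConst (hα : 1 ≤ α) (hβ : 1 ≤ β) (hp : n + 1 ≤ p * α) {w : ℝ}
    (hw : w ∈ Ioo 0 (π / 2))
    (hleft : jacobiHeight α β n * tan w ^ 2 ≤ 64 * liouvilleParam β ^ 3) :
    |jacobiWave α β n w| ≤ leftConst β p *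
      ((n + 1 : ℝ) ^ (-(1 / 2) : ℝ) * ((n + 1) / (α + 1)) ^ (β / 2 + 1 / 4)) :=
  abs_jacobiWave_le_of_tan_sq_le hα hβ hp hw <| by
    linarith [mul_le_mul_of_nonneg_right (le_jacobiHeight hα hβ n) (sq_nonneg (tan w))]

lemma abs_jacobiWave_le_jacobiConst (hα : 1 ≤ α) (hβ : 1 ≤ β) (hp : n + 1 ≤ p * α) {w : ℝ}
    (hw : w ∈ Ioo 0 (π / 2)) :
    |jacobiWave α β n w| ≤ jacobiConst β p * (n + 1 : ℝ) ^ (-(1 / 3) : ℝ) *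
      ((n + 1) / (α + 1)) ^ (β / 2 + 1 / 4) := by
  have H := isAiryScale_jacobi hα hβ hp
  have hp0 := nonneg_of_le_mul hα hp
  have hR := heightConst_nonneg hβ hp0
  have hm : (0 : ℝ) < n + 1 := by positivity
  have : 0 < α := by linarith
  set S := airyConst (liouvilleParam β) (4 * heightConst β p * p) * soninConst (liouvilleParam β)
    with hS
  set X := ((n + 1) / (α + 1)) ^ (β / 2 + 1 / 4)
  have hS0 : 0 ≤ S := mul_nonneg (by unfold airyConst airyShift; positivity)
    (zero_le_one.trans H.one_le_soninConst)
  have hsq := H.sq_le (isPoschlTellerWave_jacobiWave (liouvilleParam_sq hα)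
    (liouvilleParam_sq hβ) n) (continuous_jacobiWave (by linarith) (by linarith) n)
    (jacobiWave_pi_div_two (by linarith) β n)
    (fun w hw => abs_jacobiWave_le_leftConst hα hβ hp hw) hw
  have hpow : (n + 1 : ℝ) ^ (1 / 3 : ℝ) * ((n + 1 : ℝ) ^ (-(1 / 2) : ℝ)) ^ 2 =
      ((n + 1 : ℝ) ^ (-(1 / 3) : ℝ)) ^ 2 := by
    rw [← rpow_mul_natCast hm.le, ← rpow_mul_natCast hm.le, ← rpow_add hm]
    norm_num
  refine abs_le_of_sq_le_sq (hsq.trans ?_) (by have := jacobiConst_pos hβ hp0; positivity)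
  calc _ = S * jacobiScale α β n * (leftConst β p * ((n + 1 : ℝ) ^ (-(1 / 2) : ℝ) * X)) ^ 2 := by
        ring
    _ ≤ S * ((2 * heightConst β p) ^ (1 / 3 : ℝ) * (n + 1 : ℝ) ^ (1 / 3 : ℝ)) *
        (leftConst β p * ((n + 1 : ℝ) ^ (-(1 / 2) : ℝ) * X)) ^ 2 := by
        gcongr
        exact jacobiScale_le hα hβ hp
    _ = S * (2 * heightConst β p) ^ (1 / 3 : ℝ) * leftConst β p ^ 2 *
        ((n + 1 : ℝ) ^ (-(1 / 3) : ℝ)) ^ 2 * X ^ 2 := by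
        rw [← hpow]
        ring
    _ = _ := by
        rw [jacobiConst, ← hS, mul_pow, mul_pow, mul_pow, Real.sq_sqrt (by positivity)]

lemma exists_weighted_jacobi_eq_jacobiWave (hα : 0 ≤ α) (hβ : 0 ≤ β) (n : ℕ) {x : ℝ}
    (hx : x ∈ Icc (-1) 1) : ∃ w ∈ Icc 0 (π / 2),
      ((1 - x) / 2) ^ (α / 2 + 1 / 4) * ((1 + x) / 2) ^ (β / 2 + 1 / 4) * jacobi α β n x =
        jacobiWave α β n w := by
  have hw : arcsin √((1 + x) / 2) ∈ Icc 0 (π / 2) :=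
    ⟨arcsin_nonneg.2 (Real.sqrt_nonneg _), arcsin_le_pi_div_two _⟩
  have hsin : sin (arcsin √((1 + x) / 2)) ^ 2 = (1 + x) / 2 := by
    rw [sin_arcsin (by linarith [Real.sqrt_nonneg ((1 + x) / 2)])
      (Real.sqrt_le_one.2 (by linarith [hx.2])), Real.sq_sqrt (by linarith [hx.1])]
  refine ⟨_, hw, ?_⟩
  rw [jacobiWave_eq hα hβ n hw, cos_sq', hsin]
  ring_nf

theorem stmt8_general (β : ℝ) (hβ : 1 ≤ β) (c : ℝ) (hc : 0 < c) :
    ∃ C : ℝ, 0 < C ∧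
      ∀ x ∈ Icc (-1 : ℝ) 1, ∀ (α : ℝ) (n : ℕ), 1 ≤ α → c * (1 + (n : ℝ)) ≤ α →
        ((1 - x) / 2) ^ (α / 2 + 1 / 4) * ((1 + x) / 2) ^ (β / 2 + 1 / 4) * |jacobi α β n x|
          ≤ C * ((n : ℝ) + 1) ^ (-(1 / 3) : ℝ) *
              (((n : ℝ) + 1) / (α + 1)) ^ (β / 2 + 1 / 4) := by
  refine ⟨jacobiConst β (1 / c), jacobiConst_pos hβ (by positivity), fun x hx α n hα hαn => ?_⟩
  have hp : n + 1 ≤ 1 / c * α := by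
    rw [one_div_mul_eq_div, le_div_iff₀' hc]
    linarith
  have hα0 : 0 ≤ α := by linarith
  have hβ0 : 0 ≤ β := by linarith
  obtain ⟨w, hw, hwave⟩ := exists_weighted_jacobi_eq_jacobiWave hα0 hβ0 n hx
  have hleft : 0 ≤ (1 - x) / 2 := by linarith [hx.2]
  have hright : 0 ≤ (1 + x) / 2 := by linarith [hx.1]
  calc _ = |jacobiWave α β n w| := by
        rw [← hwave, abs_mul,
          abs_of_nonneg (mul_nonneg (rpow_nonneg hleft _) (rpow_nonneg hright _))]
    _ ≤ _ := le_on_closure (fun z hz => abs_jacobiWave_le_jacobiConst hα hβ hp hz)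
        (continuous_jacobiWave hα0 hβ0 n).abs.continuousOn continuousOn_const
        (by rwa [closure_Ioo pi_div_two_pos.ne])

end Scale

theorem stmt8 (β : ℕ) (hβ : 0 < β) (c : ℝ) (hc : 0 < c) :
    ∃ C : ℝ, 0 < C ∧
      ∀ x ∈ Set.Icc (-1 : ℝ) 1, ∀ α n : ℕ, c * (1 + (n : ℝ)) ≤ (α : ℝ) →
        ((1 - x) / 2) ^ ((α : ℝ) / 2 + 1 / 4) * ((1 + x) / 2) ^ ((β : ℝ) / 2 + 1 / 4) *
            |jacobi (α : ℝ) (β : ℝ) n x|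
          ≤ C * ((n : ℝ) + 1) ^ (-(1 / 3) : ℝ) *
              (((n : ℝ) + 1) / ((α : ℝ) + 1)) ^ ((β : ℝ) / 2 + 1 / 4) := by
  obtain ⟨C, hC, h⟩ := stmt8_general β (Nat.one_le_cast.2 hβ) c hc
  exact ⟨C, hC, fun x hx α n hα =>
    h x hx α n (Nat.one_le_cast.2 (Nat.cast_pos.1 (lt_of_lt_of_le (by positivity) hα))) hα⟩
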